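/- Lower bound on Dirichlet boundary-crossing probabilities for all thresholds: Let m ≥ 1, b > 0, and let f : {0,…,m} → [0,b] satisfy f(0) = 0 and f(m) = b. Let α = (α_0,…,α_m) ∈ ℝ_{>0}^{m+1}, set ᾱ = Σ_{j=0}^m α_j and p̄(ℓ) = α_ℓ/ᾱ for ℓ = 0,…,m. Fix ε ∈ (0,1) and assume min(α_0, α_m) ≥ c₀·ε^{−2}. Define α⁺ = (α_0, α_1, …, α_{m−1}, α_m + 1). Then for every μ ∈ (0, b), P_{w ∼ Dir(α⁺)}( wf ≥ μ ) ≥ (1 − ε) · P_{ζ ∼ N(0,1)}( ζ ≥ √ᾱ · A(p̄, μ, f) ). -/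

import Mathlib

open MeasureTheory ProbabilityTheory Real Set
open scoped ENNReal

noncomputable section

/-- The absolute constant `c₀ = (2/π)(8 + 49√6/9)²`. -/
def c0 : ℝ := (2 / Real.pi) * (8 + 49 * Real.sqrt 6 / 9) ^ 2

/-- Unnormalized density of `Dir(α)` in the first `m` coordinates. -/
def dirichletDensity (m : ℕ) (α : Fin (m + 1) → ℝ) : (Fin m → ℝ) → ℝ :=
  Set.indicator {x | (∀ i, 0 ≤ x i) ∧ ∑ i, x i ≤ 1}
    (fun x => (∏ i : Fin m, x i ^ (α i.castSucc - 1)) * (1 - ∑ i, x i) ^ (α (Fin.last m) - 1))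

def dirichletBase (m : ℕ) (α : Fin (m + 1) → ℝ) : Measure (Fin m → ℝ) :=
  volume.withDensity fun x => ENNReal.ofReal (dirichletDensity m α x)

/-- The Dirichlet distribution `Dir(α)`, as the law of the vector
`(x₀, …, x_{m-1}, 1 - ∑ x_i)` on the simplex `Δ_m ⊆ ℝ^{m+1}`. -/
def dirichlet (m : ℕ) (α : Fin (m + 1) → ℝ) : Measure (Fin (m + 1) → ℝ) :=
  Measure.map (fun x : Fin m → ℝ => Fin.snoc x (1 - ∑ i, x i))
    ((dirichletBase m α Set.univ)⁻¹ • dirichletBase m α)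

/-- Kullback–Leibler divergence between finitely supported `p, q` (for `p ≪ q`). -/
def klReal {m : ℕ} (p q : Fin (m + 1) → ℝ) : ℝ :=
  ∑ i, if p i = 0 then 0 else p i * Real.log (p i / q i)

/-- `Kinf(p, μ, f) = inf { KL(p,q) : q ∈ Δ_m, qf ≥ μ }`. -/
def Kinf {m : ℕ} (p : Fin (m + 1) → ℝ) (μ : ℝ) (f : Fin (m + 1) → ℝ) : ℝ :=
  sInf {x | ∃ q ∈ stdSimplex ℝ (Fin (m + 1)),
    (∀ i, q i = 0 → p i = 0) ∧ μ ≤ ∑ i, f i * q i ∧ x = klReal p q}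

/-- `Kinf*(p, μ, f) = inf { KL(p,q) : q ∈ Δ_m, qf = μ }`. -/
def Kinfstar {m : ℕ} (p : Fin (m + 1) → ℝ) (μ : ℝ) (f : Fin (m + 1) → ℝ) : ℝ :=
  sInf {x | ∃ q ∈ stdSimplex ℝ (Fin (m + 1)),
    (∀ i, q i = 0 → p i = 0) ∧ (∑ i, f i * q i) = μ ∧ x = klReal p q}

/-- `A(p, μ, f) = sgn(μ - pf) √(2 Kinf*(p, μ, f))`. -/
def Afun {m : ℕ} (p : Fin (m + 1) → ℝ) (μ : ℝ) (f : Fin (m + 1) → ℝ) : ℝ :=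
  Real.sign (μ - ∑ ℓ, f ℓ * p ℓ) * Real.sqrt (2 * Kinfstar p μ f)



lemma dc_one_sub_mem (τ : ℝ) : (1 - (τ : ℂ) * Complex.I) ∈ Complex.slitPlane := by
  left; simp

lemma dc_one_sub_ne (τ : ℝ) : (1 - (τ : ℂ) * Complex.I) ≠ 0 :=
  Complex.slitPlane_ne_zero (dc_one_sub_mem τ)

lemma dc_one_le_norm (τ : ℝ) : 1 ≤ ‖1 - (τ : ℂ) * Complex.I‖ := by
  have h := Complex.abs_re_le_norm (1 - (τ : ℂ) * Complex.I)
  simpa using h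

lemma dc_normSq (τ : ℝ) : ‖1 - (τ : ℂ) * Complex.I‖ ^ 2 = 1 + τ ^ 2 := by
  rw [← Complex.normSq_eq_norm_sq, Complex.normSq_apply]
  simp; ring

lemma dc_clog_bound (τ : ℝ) :
    ‖Complex.log (1 - (τ : ℂ) * Complex.I) + (τ : ℂ) * Complex.I - (τ : ℂ) ^ 2 / 2‖ ≤ |τ| ^ 3 := by
  let F : ℝ → ℂ := fun τ => Complex.log (1 - (τ : ℂ) * Complex.I) + (τ : ℂ) * Complex.I - (τ : ℂ) ^ 2 / 2
  let F' : ℝ → ℂ := fun τ => Complex.I * (τ : ℂ) ^ 2 / (1 - (τ : ℂ) * Complex.I)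
  have hd : ∀ x : ℝ, HasDerivAt F (F' x) x := by
    intro x
    have hid : HasDerivAt (fun τ : ℝ => (τ : ℂ)) 1 x := Complex.ofRealCLM.hasDerivAt
    have h1 : HasDerivAt (fun τ : ℝ => 1 - (τ : ℂ) * Complex.I) (-(1 * Complex.I)) x :=
      (hid.mul_const Complex.I).const_sub 1
    have h2 := (h1.clog_real (dc_one_sub_mem x)).add (hid.mul_const Complex.I)
    have h3 := h2.sub ((hid.pow 2).div_const 2)
    refine h3.congr_deriv ?_
    have := dc_one_sub_ne x
    simp only [F']
    rw [eq_div_iff this, sub_mul, add_mul, div_mul_cancel₀ _ this]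
    push_cast
    linear_combination (-(x:ℂ) + 0) * Complex.I_sq
  have hb : ∀ x ∈ Set.uIcc 0 τ, ‖F' x‖ ≤ |τ| ^ 2 := by
    intro x hx
    have hx' : |x| ≤ |τ| := by
      have := Set.abs_sub_left_of_mem_uIcc hx
      simpa using this
    simp only [F', norm_div, norm_mul, Complex.norm_I, one_mul, norm_pow, Complex.norm_real, Real.norm_eq_abs]
    rw [div_le_iff₀ (by linarith [dc_one_le_norm x])]
    have : |x| ^ 2 ≤ |τ| ^ 2 := by gcongr
    nlinarith [dc_one_le_norm x, sq_nonneg |τ|]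
  have := (convex_uIcc (0:ℝ) τ).norm_image_sub_le_of_norm_hasDerivWithin_le
    (fun x _ => (hd x).hasDerivWithinAt) hb Set.left_mem_uIcc Set.right_mem_uIcc
  simp only [F] at this
  simp at this
  calc _ ≤ _ := this
    _ = _ := by rw [← sq_abs]; ring

/-- normalized tilted characteristic function -/
def dcPsi {ι : Type*} [Fintype ι] (α y : ι → ℝ) (k : ι) (t : ℝ) : ℂ :=
  Complex.exp (∑ i, (α i : ℂ) * (-Complex.log (1 - ((t * y i : ℝ) : ℂ) * Complex.I)
    - ((t * y i : ℝ) : ℂ) * Complex.I)) / (1 - ((t * y k : ℝ) : ℂ) * Complex.I)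

lemma dc_exp_sub (z w : ℂ) (c : ℝ) (hz : z.re ≤ c) (hw : w.re ≤ c) :
    ‖Complex.exp z - Complex.exp w‖ ≤ Real.exp c * ‖z - w‖ := by
  have := (convex_halfSpace_re_le c).norm_image_sub_le_of_norm_hasDerivWithin_le (f := Complex.exp)
    (f' := Complex.exp) (C := Real.exp c) (x := w) (y := z)
    (fun x _ => (Complex.hasDerivAt_exp x).hasDerivWithinAt)
    (fun x hx => by rw [Complex.norm_exp]; exact Real.exp_le_exp.2 hx) hw hz
  exact this

lemma dc_L_re {ι : Type*} [Fintype ι] (α y : ι → ℝ) (t : ℝ) :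
    (∑ i, (α i : ℂ) * (-Complex.log (1 - ((t * y i : ℝ) : ℂ) * Complex.I)
    - ((t * y i : ℝ) : ℂ) * Complex.I)).re = - ∑ i, α i / 2 * Real.log (1 + (t * y i) ^ 2) := by
  rw [Complex.re_sum, ← Finset.sum_neg_distrib]
  refine Finset.sum_congr rfl fun i _ => ?_
  rw [Complex.re_ofReal_mul, Complex.sub_re, Complex.neg_re, Complex.log_re, ← dc_normSq, Real.log_pow]
  simp; ring

lemma dc_bern (t y : ℝ) (hy : y ^ 2 ≤ 1 / 8) :
    8 * y ^ 2 * Real.log (1 + t ^ 2 / 8) ≤ Real.log (1 + (t * y) ^ 2) := by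
  rw [← Real.log_rpow (by positivity)]
  apply Real.log_le_log (by positivity)
  have := _root_.rpow_one_add_le_one_add_mul_self (s := t ^ 2 / 8) (p := 8 * y ^ 2)
    (by nlinarith [sq_nonneg t]) (by positivity) (by linarith)
  calc _ ≤ _ := this
    _ = _ := by ring

lemma dc_L_re_le {ι : Type*} [Fintype ι] (α y : ι → ℝ) (hα : ∀ i, 0 < α i)
    (hs : ∑ i, α i * y i ^ 2 = 1) (hy : ∀ i, y i ^ 2 ≤ 1 / 8) (t : ℝ) :
    - ∑ i, α i / 2 * Real.log (1 + (t * y i) ^ 2) ≤ - (4 * Real.log (1 + t ^ 2 / 8)) := by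
  apply neg_le_neg
  calc 4 * Real.log (1 + t ^ 2 / 8) = ∑ i, (α i * y i ^ 2) * (4 * Real.log (1 + t ^ 2 / 8)) := by
        rw [← Finset.sum_mul, hs, one_mul]
    _ ≤ _ := by
      refine Finset.sum_le_sum fun i _ => ?_
      have := mul_le_mul_of_nonneg_left (dc_bern t (y i) (hy i)) (by linarith [hα i] : 0 ≤ α i / 2)
      calc _ = _ := by ring
        _ ≤ _ := this

lemma dc_exp_log4 (t : ℝ) : Real.exp (- (4 * Real.log (1 + t ^ 2 / 8))) = ((1 + t ^ 2 / 8) ^ 4)⁻¹ := by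
  have : (4:ℝ) * Real.log (1 + t ^ 2 / 8) = Real.log ((1 + t ^ 2 / 8) ^ 4) := by
    rw [Real.log_pow]; norm_num
  rw [Real.exp_neg, this, Real.exp_log (by positivity)]

lemma dc_Psi_norm {ι : Type*} [Fintype ι] (α y : ι → ℝ) (k : ι) (hα : ∀ i, 0 < α i)
    (hs : ∑ i, α i * y i ^ 2 = 1) (hy : ∀ i, y i ^ 2 ≤ 1 / 8) (t : ℝ) :
    ‖dcPsi α y k t‖ ≤ ((1 + t ^ 2 / 8) ^ 4)⁻¹ := by
  rw [dcPsi, norm_div, Complex.norm_exp, dc_L_re, ← dc_exp_log4]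
  apply (div_le_self (Real.exp_pos _).le (dc_one_le_norm _)).trans
  exact Real.exp_le_exp.2 (dc_L_re_le α y hα hs hy t)

lemma dc_poly (t : ℝ) : |t| ^ 3 + |t| ≤ 3 * √2 * (1 + t ^ 2 / 8) ^ 3 := by
  have h2 : √2 ^ 2 = 2 := Real.sq_sqrt (by norm_num)
  have h2p : 0 < √2 := by positivity
  have h1 : |t| ≤ √2 * (1 + t ^ 2 / 8) := by
    nlinarith [sq_nonneg (|t| - 2 * √2), sq_abs t, abs_nonneg t]
  have h3 : |t| ^ 3 ≤ (√2 * (1 + t ^ 2 / 8)) ^ 3 := by gcongr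
  have h4 : (1 + t ^ 2 / 8) ≤ (1 + t ^ 2 / 8) ^ 3 :=
    le_self_pow₀ (by nlinarith [sq_nonneg t]) (by norm_num)
  have h5 : √2 ^ 3 = 2 * √2 := by rw [pow_succ, h2]
  rw [mul_pow, h5] at h3
  nlinarith

lemma dc_Psi_diff {ι : Type*} [Fintype ι] (α y : ι → ℝ) (k : ι) (η : ℝ) (hα : ∀ i, 0 < α i)
    (hs : ∑ i, α i * y i ^ 2 = 1) (hy : ∀ i, y i ^ 2 ≤ 1 / 8) (hη : ∀ i, |y i| ≤ η) (t : ℝ) :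
    ‖dcPsi α y k t - ((Real.exp (-(t ^ 2) / 2) : ℝ) : ℂ)‖ ≤ 3 * √2 * η * (1 + t ^ 2 / 8)⁻¹ := by
  have hη0 : 0 ≤ η := (abs_nonneg _).trans (hη k)
  set L : ℂ := ∑ i, (α i : ℂ) * (-Complex.log (1 - ((t * y i : ℝ) : ℂ) * Complex.I)
    - ((t * y i : ℝ) : ℂ) * Complex.I) with hL
  have hLre : L.re ≤ - (4 * Real.log (1 + t ^ 2 / 8)) := by
    rw [hL, dc_L_re]; exact dc_L_re_le α y hα hs hy t
  set c := - (4 * Real.log (1 + t ^ 2 / 8))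
  have hw : ((-(t ^ 2) / 2 : ℝ) : ℂ).re ≤ c := by
    have := Real.log_le_sub_one_of_pos (show (0:ℝ) < 1 + t ^ 2 / 8 by positivity)
    simp only [Complex.ofReal_re, c]; linarith
  have hLd : ‖L - ((-(t ^ 2) / 2 : ℝ) : ℂ)‖ ≤ η * |t| ^ 3 := by
    have e : L - ((-(t ^ 2) / 2 : ℝ) : ℂ) = ∑ i, -((α i : ℂ) * (Complex.log (1 - ((t * y i : ℝ) : ℂ) * Complex.I)
        + ((t * y i : ℝ) : ℂ) * Complex.I - ((t * y i : ℝ) : ℂ) ^ 2 / 2)) := by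
      have : ((-(t ^ 2) / 2 : ℝ) : ℂ) = ∑ i, -((α i : ℂ) * (((t * y i : ℝ) : ℂ) ^ 2 / 2)) := by
        rw [show (-(t ^ 2) / 2 : ℝ) = (∑ i, α i * y i ^ 2) * (-(t ^ 2) / 2) by rw [hs]; ring]
        push_cast
        rw [Finset.sum_mul]
        exact Finset.sum_congr rfl fun i _ => by ring
      rw [this, hL, ← Finset.sum_sub_distrib]
      exact Finset.sum_congr rfl fun i _ => by ring
    rw [e]
    refine (norm_sum_le _ _).trans ?_
    calc _ ≤ ∑ i, (α i * y i ^ 2) * (η * |t| ^ 3) := by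
          refine Finset.sum_le_sum fun i _ => ?_
          rw [norm_neg, norm_mul, Complex.norm_real, Real.norm_of_nonneg (hα i).le, mul_assoc]
          apply mul_le_mul_of_nonneg_left _ (hα i).le
          refine (dc_clog_bound _).trans ?_
          rw [abs_mul, mul_pow]
          have : |y i| ^ 3 ≤ y i ^ 2 * η := by
            rw [pow_succ, sq_abs]; exact mul_le_mul_of_nonneg_left (hη i) (sq_nonneg _)
          calc _ ≤ |t| ^ 3 * (y i ^ 2 * η) := by gcongr
            _ = _ := by ring
      _ = _ := by rw [← Finset.sum_mul, hs, one_mul]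
  have h1 := dc_exp_sub L _ c hLre hw
  have hc : Real.exp c = ((1 + t ^ 2 / 8) ^ 4)⁻¹ := dc_exp_log4 t
  set D : ℂ := (1 - ((t * y k : ℝ) : ℂ) * Complex.I) with hD
  have hD1 : 1 ≤ ‖D‖ := dc_one_le_norm _
  have hDne : D ≠ 0 := dc_one_sub_ne _
  have e2 : dcPsi α y k t - ((Real.exp (-(t ^ 2) / 2) : ℝ) : ℂ)
      = (Complex.exp L - Complex.exp ((-(t ^ 2) / 2 : ℝ) : ℂ)) + Complex.exp L * (1 - D) / D := by
    rw [dcPsi, ← hL, ← hD, Complex.ofReal_exp]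
    field_simp
    ring
  rw [e2]
  have h2 : ‖Complex.exp L * (1 - D) / D‖ ≤ Real.exp c * (η * |t|) := by
    rw [norm_div, norm_mul]
    refine (div_le_self (by positivity) hD1).trans ?_
    rw [Complex.norm_exp]
    have : ‖1 - D‖ ≤ η * |t| := by
      simp only [hD, sub_sub_cancel, norm_mul, Complex.norm_I, mul_one, Complex.norm_real, Real.norm_eq_abs]
      rw [mul_comm]; gcongr; exact hη k
    gcongr
  calc _ ≤ _ := norm_add_le _ _
    _ ≤ Real.exp c * (η * |t| ^ 3) + Real.exp c * (η * |t|) := by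
      refine add_le_add (h1.trans ?_) h2
      gcongr
    _ = η * (|t| ^ 3 + |t|) * Real.exp c := by ring
    _ ≤ η * (3 * √2 * (1 + t ^ 2 / 8) ^ 3) * Real.exp c := by gcongr; exact dc_poly t
    _ = _ := by
      rw [hc]
      have : (1 + t ^ 2 / 8) ≠ 0 := by positivity
      field_simp

lemma dc_Psi_cont {ι : Type*} [Fintype ι] (α y : ι → ℝ) (k : ι) : Continuous (dcPsi α y k) := by
  unfold dcPsi
  refine Continuous.div ?_ (by fun_prop) (fun t => dc_one_sub_ne _)
  refine Complex.continuous_exp.comp ?_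
  refine continuous_finsetSum _ fun i _ => ?_
  refine continuous_const.mul ((Continuous.neg ?_).sub (by fun_prop))
  exact Continuous.clog (by fun_prop) fun t => dc_one_sub_mem _

lemma dc_scale {ι : Type*} [Fintype ι] (α y : ι → ℝ) (k : ι) (s : ℝ) (hs : 0 < s) (t : ℝ) :
    dcPsi α y k t = dcPsi α (fun i => y i / s) k (s * t) := by
  unfold dcPsi
  have : ∀ i, s * t * (y i / s) = t * y i := fun i => by field_simp
  simp only [this]

lemma dc_int_cauchy (s : ℝ) (hs : 0 < s) :
    Integrable (fun t : ℝ => (1 + (s * t) ^ 2 / 8)⁻¹) ∧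
      ∫ t : ℝ, (1 + (s * t) ^ 2 / 8)⁻¹ = 2 * √2 * π / s := by
  have h2 : √2 ^ 2 = 2 := Real.sq_sqrt (by norm_num)
  have e : (fun t : ℝ => (1 + (s * t) ^ 2 / 8)⁻¹) = fun t => (fun u : ℝ => (1 + u ^ 2)⁻¹) (s / (2 * √2) * t) := by
    ext t
    simp only
    congr 2
    rw [mul_pow, mul_pow, div_pow, mul_pow, h2]; ring
  have hp : 0 < s / (2 * √2) := by positivity
  rw [e]
  refine ⟨integrable_inv_one_add_sq.comp_mul_left' hp.ne', ?_⟩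
  rw [Measure.integral_comp_mul_left (fun u : ℝ => (1 + u ^ 2)⁻¹), integral_univ_inv_one_add_sq, abs_of_pos (by positivity), smul_eq_mul]
  field_simp

lemma dc_Psi_main {ι : Type*} [Fintype ι] (α y : ι → ℝ) (k : ι) (η s : ℝ) (hα : ∀ i, 0 < α i)
    (hs0 : 0 < s)
    (hs : ∑ i, α i * y i ^ 2 = s ^ 2) (hη8 : η ^ 2 ≤ 1 / 8) (hη : ∀ i, |y i| ≤ η * s) :
    Integrable (dcPsi α y k) ∧ |(∫ t, dcPsi α y k t).re - √(2 * π) / s| ≤ 12 * π * η / s := by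
  have h2 : √2 ^ 2 = 2 := Real.sq_sqrt (by norm_num)
  set z : ι → ℝ := fun i => y i / s with hz
  have hzη : ∀ i, |z i| ≤ η := fun i => by
    rw [hz]; simp only [abs_div, abs_of_pos hs0]; rw [div_le_iff₀ hs0]; exact hη i
  have hz8 : ∀ i, z i ^ 2 ≤ 1 / 8 := fun i => by
    rw [← sq_abs]; refine le_trans ?_ hη8; gcongr; exact hzη i
  have hzs : ∑ i, α i * z i ^ 2 = 1 := by
    simp only [hz, div_pow, mul_div_assoc', ← Finset.sum_div, hs]; field_simp
  obtain ⟨hci, hcv⟩ := dc_int_cauchy s hs0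
  have hintg : Integrable (dcPsi α y k) := by
    refine hci.mono' (dc_Psi_cont α y k).aestronglyMeasurable (Filter.Eventually.of_forall fun t => ?_)
    rw [dc_scale α y k s hs0]
    refine (dc_Psi_norm α z k hα hzs hz8 (s * t)).trans ?_
    refine inv_anti₀ (by positivity) (le_self_pow₀ ?_ (by norm_num))
    nlinarith [sq_nonneg (s * t)]
  refine ⟨hintg, ?_⟩
  have hg : Integrable (fun t : ℝ => Real.exp (-(s ^ 2 / 2) * t ^ 2)) := integrable_exp_neg_mul_sq (by positivity)
  have hgv : ∫ t : ℝ, Real.exp (-(s ^ 2 / 2) * t ^ 2) = √(2 * π) / s := by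
    rw [integral_gaussian, show π / (s ^ 2 / 2) = (2 * π) / s ^ 2 by field_simp, Real.sqrt_div (by positivity),
      Real.sqrt_sq hs0.le]
  have e : (∫ t, dcPsi α y k t) - ((√(2 * π) / s : ℝ) : ℂ)
      = ∫ t, (dcPsi α y k t - ((Real.exp (-(s ^ 2 / 2) * t ^ 2) : ℝ) : ℂ)) := by
    have := integral_sub hintg (hg.ofReal (𝕜 := ℂ))
    refine Eq.trans ?_ this.symm
    rw [← hgv]
    congr 1
    exact integral_complex_ofReal.symm
  have e2 : (∫ t, dcPsi α y k t).re - √(2 * π) / s = ((∫ t, dcPsi α y k t) - ((√(2 * π) / s : ℝ) : ℂ)).re := by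
    simp
  rw [e2]
  refine (Complex.abs_re_le_norm _).trans ?_
  rw [e]
  calc _ ≤ ∫ t, 3 * √2 * η * (1 + (s * t) ^ 2 / 8)⁻¹ := by
        refine norm_integral_le_of_norm_le (hci.const_mul _) (Filter.Eventually.of_forall fun t => ?_)
        have := dc_Psi_diff α z k η hα hzs hz8 hzη (s * t)
        rw [dc_scale α y k s hs0]
        rwa [show -(s ^ 2 / 2) * t ^ 2 = -(s * t) ^ 2 / 2 by ring]
    _ = _ := by
      rw [integral_const_mul, hcv]
      have : √2 * √2 = 2 := by rw [← sq, h2]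
      calc _ = 6 * (√2 * √2) * η * π / s := by ring
        _ = _ := by rw [this]; ring


lemma dc_gammaPDF_int (a r : ℝ) (ha : 0 < a) (hr : 0 < r) :
    Integrable (gammaPDFReal a r) ∧ ∫ y, gammaPDFReal a r y = 1 := by
  have h1 := lintegral_gammaPDF_eq_one ha hr
  unfold gammaPDF at h1
  have hn : 0 ≤ᵐ[volume] gammaPDFReal a r := Filter.Eventually.of_forall (gammaPDFReal_nonneg ha hr)
  have hm : AEStronglyMeasurable (gammaPDFReal a r) := (stronglyMeasurable_gammaPDFReal a r).aestronglyMeasurable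
  have hi : Integrable (gammaPDFReal a r) := by
    refine ⟨hm, ?_⟩
    rw [hasFiniteIntegral_iff_ofReal hn, h1]; simp
  refine ⟨hi, ?_⟩
  rw [integral_eq_lintegral_of_nonneg_ae hn hm, h1]; simp

lemma dc_gamma_tilt (a l y : ℝ) (hl : l < 1) :
    gammaPDFReal a 1 y * Real.exp (l * y) = (1 - l) ^ (-a) * gammaPDFReal a (1 - l) y := by
  unfold gammaPDFReal
  split_ifs with h
  · have h1 : 0 < 1 - l := by linarith
    rw [Real.one_rpow, Real.rpow_neg h1.le]
    have : (1 - l) ^ a ≠ 0 := (Real.rpow_pos_of_pos h1 a).ne'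
    have e : Real.exp (-((1 - l) * y)) = Real.exp (-(1 * y)) * Real.exp (l * y) := by
      rw [← Real.exp_add]; congr 1; ring
    rw [e]
    field_simp
  · simp

lemma dc_gamma_integral (a : ℝ) (ha : 0 < a) {E : Type*} [NormedAddCommGroup E] [NormedSpace ℝ E] (h : ℝ → E) :
    ∫ y, h y ∂(gammaMeasure a 1) = ∫ y, gammaPDFReal a 1 y • h y := by
  unfold gammaMeasure gammaPDF
  rw [integral_withDensity_eq_integral_toReal_smul]
  · refine integral_congr_ae (Filter.Eventually.of_forall fun y => ?_)
    simp only
    rw [ENNReal.toReal_ofReal (gammaPDFReal_nonneg ha one_pos y)]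
  · exact (measurable_gammaPDFReal a 1).ennreal_ofReal
  · simp

lemma dc_gamma_integrable (a l : ℝ) (ha : 0 < a) (hl : l < 1) :
    Integrable (fun y => Real.exp (l * y)) (gammaMeasure a 1) := by
  unfold gammaMeasure gammaPDF
  rw [integrable_withDensity_iff (measurable_gammaPDFReal a 1).ennreal_ofReal (by simp)]
  have : (fun x => Real.exp (l * x) * (ENNReal.ofReal (gammaPDFReal a 1 x)).toReal)
      = fun x => (1 - l) ^ (-a) * gammaPDFReal a (1 - l) x := by
    ext x
    rw [ENNReal.toReal_ofReal (gammaPDFReal_nonneg ha one_pos x), mul_comm, dc_gamma_tilt _ _ _ hl]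
  rw [this]
  exact (dc_gammaPDF_int a (1 - l) ha (by linarith)).1.const_mul _

lemma dc_gamma_mgf (a l : ℝ) (ha : 0 < a) (hl : l < 1) :
    mgf id (gammaMeasure a 1) l = (1 - l) ^ (-a) := by
  unfold mgf
  rw [dc_gamma_integral a ha]
  simp only [id, smul_eq_mul]
  simp_rw [dc_gamma_tilt a l _ hl]
  rw [integral_const_mul, (dc_gammaPDF_int a (1 - l) ha (by linarith)).2, mul_one]

lemma dc_gamma_expset (a : ℝ) (ha : 0 < a) : Iio 1 ⊆ interior (integrableExpSet id (gammaMeasure a 1)) := by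
  rw [isOpen_Iio.subset_interior_iff]
  intro l hl
  exact dc_gamma_integrable a l ha hl

lemma dc_gamma_cmgf (a : ℝ) (ha : 0 < a) (z : ℂ) (hz : z.re < 1) :
    ∫ y : ℝ, Complex.exp (z * y) ∂(gammaMeasure a 1) = Complex.exp (-(a : ℂ) * Complex.log (1 - z)) := by
  have hU : IsPreconnected {z : ℂ | z.re < 1} := (convex_halfSpace_re_lt 1).isPreconnected
  have hA : AnalyticOnNhd ℂ (complexMGF id (gammaMeasure a 1)) {z : ℂ | z.re < 1} :=
    analyticOnNhd_complexMGF.mono fun z hz => dc_gamma_expset a ha hz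
  have hB : AnalyticOnNhd ℂ (fun z : ℂ => Complex.exp (-(a : ℂ) * Complex.log (1 - z))) {z : ℂ | z.re < 1} := by
    refine DifferentiableOn.analyticOnNhd ?_ (isOpen_lt Complex.continuous_re continuous_const)
    intro z hz
    refine DifferentiableAt.differentiableWithinAt ?_
    refine DifferentiableAt.cexp ((DifferentiableAt.clog (by fun_prop) ?_).const_mul _)
    left; have hz' : z.re < 1 := hz; simp; linarith
  have hreal : ∀ x : ℝ, x < 1 → complexMGF id (gammaMeasure a 1) x = Complex.exp (-(a : ℂ) * Complex.log (1 - x)) := by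
    intro x hx
    rw [complexMGF_ofReal, dc_gamma_mgf a x ha hx, Real.rpow_def_of_pos (by linarith)]
    rw [show (1 - (x:ℂ)) = ((1 - x : ℝ) : ℂ) by push_cast; rfl, ← Complex.ofReal_log (by linarith)]
    push_cast; congr 1; ring
  have hfr : ∃ᶠ z in nhdsWithin (0:ℂ) {0}ᶜ, complexMGF id (gammaMeasure a 1) z = Complex.exp (-(a : ℂ) * Complex.log (1 - z)) := by
    refine Filter.Tendsto.frequently (f := fun n : ℕ => ((-(1 / ((n:ℝ) + 1)) : ℝ) : ℂ)) (l₁ := Filter.atTop) ?_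
      (Filter.Frequently.of_forall fun n => hreal _ ?_)
    · rw [tendsto_nhdsWithin_iff]
      constructor
      · have := (tendsto_one_div_add_atTop_nhds_zero_nat (𝕜 := ℝ)).neg
        rw [neg_zero] at this
        exact_mod_cast (Complex.continuous_ofReal.tendsto 0).comp this
      · refine Filter.Eventually.of_forall fun n => ?_
        simp only [mem_compl_iff, mem_singleton_iff, Complex.ofReal_eq_zero, neg_eq_zero]
        positivity
    · have : 0 < 1 / ((n:ℝ) + 1) := by positivity
      linarith
  have := hA.eqOn_of_preconnected_of_frequently_eq hB hU (z₀ := 0) (by simp) hfr hz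
  exact this

/-- product of gamma measures -/
def dcPi {n : ℕ} (a : Fin n → ℝ) : Measure (Fin n → ℝ) := Measure.pi fun i => gammaMeasure (a i) 1

lemma dc_gm_prob {a : ℝ} (ha : 0 < a) : IsProbabilityMeasure (gammaMeasure a 1) :=
  isProbabilityMeasure_gammaMeasure ha one_pos

lemma dcPi_prob {n : ℕ} (a : Fin n → ℝ) (ha : ∀ i, 0 < a i) : IsProbabilityMeasure (dcPi a) := by
  have := fun i => dc_gm_prob (ha i)
  unfold dcPi; infer_instance

lemma dc_pi_cmgf {n : ℕ} (a x : Fin n → ℝ) (ha : ∀ i, 0 < a i) (z : ℂ) (hz : ∀ i, z.re * x i < 1) :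
    ∫ y, Complex.exp (z * ((∑ i, x i * y i : ℝ) : ℂ)) ∂(dcPi a)
      = Complex.exp (∑ i, -(a i : ℂ) * Complex.log (1 - z * x i)) := by
  have := fun i => dc_gm_prob (ha i)
  unfold dcPi
  have e : ∀ y : Fin n → ℝ, Complex.exp (z * ((∑ i, x i * y i : ℝ) : ℂ))
      = ∏ i, (fun (i : Fin n) (t : ℝ) => Complex.exp ((z * x i) * t)) i (y i) := by
    intro y
    simp only
    rw [← Complex.exp_sum]; push_cast; rw [Finset.mul_sum]
    congr 1; exact Finset.sum_congr rfl fun i _ => by ring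
  simp_rw [e]
  have h2 := integral_fin_nat_prod_eq_prod (μ := fun i => gammaMeasure (a i) 1)
    (fun (i : Fin n) (t : ℝ) => Complex.exp ((z * x i) * t))
  refine h2.trans ?_
  rw [Complex.exp_sum]
  refine Finset.prod_congr rfl fun i _ => ?_
  exact dc_gamma_cmgf (a i) (ha i) _ (by simpa using hz i)

lemma dc_pi_integrable {n : ℕ} (a x : Fin n → ℝ) (ha : ∀ i, 0 < a i) (l : ℝ) (hz : ∀ i, l * x i < 1) :
    Integrable (fun y : Fin n → ℝ => Real.exp (l * (∑ i, x i * y i))) (dcPi a) := by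
  have := fun i => dc_gm_prob (ha i)
  unfold dcPi
  have e : (fun y : Fin n → ℝ => Real.exp (l * (∑ i, x i * y i)))
      = fun y => ∏ i, (fun (i : Fin n) (t : ℝ) => Real.exp ((l * x i) * t)) i (y i) := by
    ext y
    simp only
    rw [← Real.exp_sum, Finset.mul_sum]
    congr 1; exact Finset.sum_congr rfl fun i _ => by ring
  rw [e]
  exact Integrable.fin_nat_prod fun i => dc_gamma_integrable (a i) _ (ha i) (hz i)

lemma dc_pdf_eq (a y : ℝ) (ha : 1 < a) :
    gammaPDFReal a 1 y = 1 / Real.Gamma a * (max y 0) ^ (a - 1) * Real.exp (-(max y 0)) := by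
  unfold gammaPDFReal
  split_ifs with h
  · rw [max_eq_left h]; simp
  · rw [max_eq_right (not_le.1 h).le, Real.zero_rpow (by linarith)]; simp

lemma dc_pdf_cont (a : ℝ) (ha : 1 < a) : Continuous (gammaPDFReal a 1) := by
  have : gammaPDFReal a 1 = fun y => 1 / Real.Gamma a * (max y 0) ^ (a - 1) * Real.exp (-(max y 0)) := by
    ext y; exact dc_pdf_eq a y ha
  rw [this]
  refine (continuous_const.mul ?_).mul (by fun_prop)
  exact Continuous.rpow_const (by fun_prop) fun _ => Or.inr (by linarith)

lemma dc_pdf_bdd (a : ℝ) (ha : 1 < a) : ∃ C, ∀ y, gammaPDFReal a 1 y ≤ C := by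
  refine ⟨1 / Real.Gamma a * (a - 1) ^ (a - 1), fun y => ?_⟩
  rw [dc_pdf_eq a y ha, mul_assoc]
  have hG : 0 < Real.Gamma a := Real.Gamma_pos_of_pos (by linarith)
  refine mul_le_mul_of_nonneg_left ?_ (by positivity)
  set w := max y 0
  have hw : 0 ≤ w := le_max_right _ _
  set c := a - 1
  have hc : 0 < c := by simp only [c]; linarith
  have h1 : w / c ≤ Real.exp (w / c) := by linarith [Real.add_one_le_exp (w / c)]
  have h2 : (w / c) ^ c ≤ (Real.exp (w / c)) ^ c := Real.rpow_le_rpow (by positivity) h1 hc.le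
  rw [← Real.exp_mul, div_mul_cancel₀ _ hc.ne', Real.div_rpow hw hc.le, div_le_iff₀ (by positivity)] at h2
  rw [Real.exp_neg, ← div_eq_mul_inv, div_le_iff₀ (Real.exp_pos _)]
  linarith

/-- density of `∑ x i * y i` -/
def dcDens {m : ℕ} (a x : Fin (m + 1) → ℝ) (v : ℝ) : ℝ :=
  ∫ y' : Fin m → ℝ, gammaPDFReal (a (Fin.last m)) 1 ((v - ∑ j, x j.castSucc * y' j) / x (Fin.last m))
    / x (Fin.last m) ∂(dcPi fun j => a j.castSucc)

lemma dcDens_cont {m : ℕ} (a x : Fin (m + 1) → ℝ) (ha : ∀ i, 0 < a i) (ha1 : 1 < a (Fin.last m))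
    (hx : 0 < x (Fin.last m)) : Continuous (dcDens a x) := by
  obtain ⟨C, hC⟩ := dc_pdf_bdd _ ha1
  have := dcPi_prob (fun j : Fin m => a j.castSucc) fun j => ha _
  have hc := dc_pdf_cont _ ha1
  refine continuous_of_dominated (bound := fun _ => C / x (Fin.last m)) ?_ ?_ (integrable_const _) ?_
  · intro v
    exact Continuous.aestronglyMeasurable (by fun_prop)
  · intro v
    refine Filter.Eventually.of_forall fun y => ?_
    rw [Real.norm_of_nonneg (div_nonneg (gammaPDFReal_nonneg (ha _) one_pos _) hx.le)]
    gcongr; exact hC _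
  · refine Filter.Eventually.of_forall fun y => ?_
    fun_prop

lemma dcDens_nonneg {m : ℕ} (a x : Fin (m + 1) → ℝ) (ha : ∀ i, 0 < a i)
    (hx : 0 < x (Fin.last m)) (v : ℝ) : 0 ≤ dcDens a x v :=
  integral_nonneg fun _ => div_nonneg (gammaPDFReal_nonneg (ha _) one_pos _) hx.le

lemma dc_pi_lintegral {m : ℕ} (a : Fin (m + 1) → ℝ) (ha : ∀ i, 0 < a i)
    (F : (Fin (m + 1) → ℝ) → ℝ≥0∞) (hF : Measurable F) :
    ∫⁻ y, F y ∂(dcPi a) = ∫⁻ y' : Fin m → ℝ, ∫⁻ t : ℝ, F (Fin.snoc y' t) * ENNReal.ofReal (gammaPDFReal (a (Fin.last m)) 1 t)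
      ∂volume ∂(dcPi fun j => a j.castSucc) := by
  have := fun i => dc_gm_prob (ha i)
  have hp := dcPi_prob (fun j : Fin m => a j.castSucc) fun j => ha _
  have h := (measurePreserving_piFinSuccAbove (fun i => gammaMeasure (a i) 1) (Fin.last m)).symm
  have h2 := h.lintegral_comp_emb (MeasurableEquiv.measurableEmbedding _) F
  simp only [Fin.succAbove_last] at h2
  unfold dcPi at hp ⊢
  rw [← h2, lintegral_prod_symm]
  · refine lintegral_congr fun y' => ?_
    unfold gammaMeasure gammaPDF
    rw [lintegral_withDensity_eq_lintegral_mul₀]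
    · refine lintegral_congr fun t => ?_
      rw [Pi.mul_apply, mul_comm]
      congr 2
      simp [MeasurableEquiv.piFinSuccAbove_symm_apply, Fin.insertNthEquiv]
    · exact (measurable_gammaPDFReal _ 1).ennreal_ofReal.aemeasurable
    · refine Measurable.aemeasurable ?_
      exact hF.comp ((MeasurableEquiv.measurable _).comp (by fun_prop))
  · exact (hF.comp (MeasurableEquiv.measurable _)).aemeasurable

lemma dc_snoc_meas {m : ℕ} : Measurable fun p : (Fin m → ℝ) × ℝ => (Fin.snoc p.1 p.2 : Fin (m + 1) → ℝ) := by
  refine measurable_pi_lambda _ fun i => ?_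
  refine Fin.lastCases ?_ (fun j => ?_) i
  · simp only [Fin.snoc_last]; fun_prop
  · simp only [Fin.snoc_castSucc]; fun_prop

lemma dc_law {m : ℕ} (a x : Fin (m + 1) → ℝ) (ha : ∀ i, 0 < a i) (ha1 : 1 < a (Fin.last m))
    (hx : 0 < x (Fin.last m)) :
    (dcPi a).map (fun y => ∑ i, x i * y i) = volume.withDensity fun v => ENNReal.ofReal (dcDens a x v) := by
  have hp := dcPi_prob (fun j : Fin m => a j.castSucc) fun j => ha _
  have hmX : Measurable (fun y : Fin (m + 1) → ℝ => ∑ i, x i * y i) := by fun_prop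
  ext A hA
  rw [Measure.map_apply hmX hA, withDensity_apply _ hA, ← lintegral_indicator_one (hmX hA), dc_pi_lintegral a ha]
  swap
  · exact measurable_one.indicator (hmX hA)
  have hg : ∀ v, ENNReal.ofReal (dcDens a x v) = ∫⁻ y' : Fin m → ℝ,
      ENNReal.ofReal (gammaPDFReal (a (Fin.last m)) 1 ((v - ∑ j, x j.castSucc * y' j) / x (Fin.last m))
        / x (Fin.last m)) ∂(dcPi fun j => a j.castSucc) := by
    intro v
    unfold dcDens
    rw [ofReal_integral_eq_lintegral_ofReal]
    · obtain ⟨C, hC⟩ := dc_pdf_bdd _ ha1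
      have hc := dc_pdf_cont _ ha1
      refine Integrable.mono' (integrable_const (C / x (Fin.last m))) (Continuous.aestronglyMeasurable (by fun_prop))
        (Filter.Eventually.of_forall fun y => ?_)
      rw [Real.norm_of_nonneg (div_nonneg (gammaPDFReal_nonneg (ha _) one_pos _) hx.le)]
      gcongr; exact hC _
    · exact Filter.Eventually.of_forall fun y => div_nonneg (gammaPDFReal_nonneg (ha _) one_pos _) hx.le
  simp_rw [hg]
  symm
  rw [lintegral_lintegral_swap]
  swap
  · refine Measurable.aemeasurable ?_
    refine Measurable.ennreal_ofReal (Measurable.div_const ?_ _)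
    refine (measurable_gammaPDFReal (a (Fin.last m)) 1).comp ?_
    refine Measurable.div_const ?_ _
    refine measurable_fst.sub ?_
    refine Finset.measurable_sum _ fun j _ => ?_
    exact ((measurable_pi_apply j).comp measurable_snd).const_mul _
  refine lintegral_congr fun y' => ?_
  symm
  set R := ∑ j, x j.castSucc * y' j with hR
  set xm := x (Fin.last m)
  set k := gammaPDFReal (a (Fin.last m)) 1
  have hk : Measurable k := measurable_gammaPDFReal _ 1
  rw [← lintegral_indicator hA]
  -- substitute v = xm * t + R
  have key : ∀ G : ℝ → ℝ≥0∞, ∫⁻ v, G v = ∫⁻ t, ENNReal.ofReal xm * G (xm * t + R) := by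
    intro G
    have h1 : ∫⁻ v, G v = ∫⁻ v, G (v + R) := (lintegral_add_right_eq_self G R).symm
    have h2 := (Homeomorph.mulLeft₀ xm hx.ne').toMeasurableEquiv.measurableEmbedding.lintegral_map
      (μ := volume) (fun v => G (v + R))
    have h3 : Measure.map (Homeomorph.mulLeft₀ xm hx.ne').toMeasurableEquiv volume = ENNReal.ofReal |xm⁻¹| • volume :=
      Real.map_volume_mul_left hx.ne'
    rw [h3, lintegral_smul_measure] at h2
    rw [h1]
    have h4 : ∫⁻ t, ENNReal.ofReal xm * G (xm * t + R) = ENNReal.ofReal xm * ∫⁻ t, G (xm * t + R) :=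
      lintegral_const_mul' _ _ ENNReal.ofReal_ne_top
    rw [h4]
    have h5 : ∫⁻ t, G (xm * t + R) = ENNReal.ofReal |xm⁻¹| • ∫⁻ v, G (v + R) := h2.symm
    rw [h5, smul_eq_mul, ← mul_assoc, ← ENNReal.ofReal_mul hx.le, abs_of_pos (by positivity), mul_inv_cancel₀ hx.ne']
    simp
  refine Eq.trans ?_ (key _).symm
  refine lintegral_congr fun t => ?_
  have hsum : ∑ i, x i * (Fin.snoc y' t : Fin (m + 1) → ℝ) i = xm * t + R := by
    rw [Fin.sum_univ_castSucc]; simp [hR, xm]; ring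
  have hmem : (Fin.snoc y' t : Fin (m + 1) → ℝ) ∈ (fun y : Fin (m + 1) → ℝ => ∑ i, x i * y i) ⁻¹' A ↔ xm * t + R ∈ A := by
    rw [mem_preimage]; simp only [hsum]
  by_cases h : xm * t + R ∈ A
  · rw [indicator_of_mem (hmem.2 h), indicator_of_mem h]
    rw [Pi.one_apply, one_mul, ← ENNReal.ofReal_mul hx.le, add_sub_cancel_right, mul_div_cancel_left₀ _ hx.ne',
      mul_div_cancel₀ _ hx.ne']
  · rw [indicator_of_notMem (fun h' => h (hmem.1 h')), indicator_of_notMem h]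
    simp

open scoped FourierTransform

lemma dc_law_integral {m : ℕ} (a x : Fin (m + 1) → ℝ) (ha : ∀ i, 0 < a i) (ha1 : 1 < a (Fin.last m))
    (hx : 0 < x (Fin.last m)) (h : ℝ → ℂ) (hh : Continuous h) :
    ∫ v, h v * (dcDens a x v : ℂ) = ∫ y, h (∑ i, x i * y i) ∂(dcPi a) := by
  have hmX : Measurable (fun y : Fin (m + 1) → ℝ => ∑ i, x i * y i) := by fun_prop
  have h1 : ∫ y, h (∑ i, x i * y i) ∂(dcPi a) = ∫ v, h v ∂((dcPi a).map (fun y => ∑ i, x i * y i)) :=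
    (integral_map hmX.aemeasurable hh.aestronglyMeasurable).symm
  rw [h1, dc_law a x ha ha1 hx, integral_withDensity_eq_integral_toReal_smul]
  · refine integral_congr_ae (Filter.Eventually.of_forall fun v => ?_)
    simp only
    rw [ENNReal.toReal_ofReal (dcDens_nonneg a x ha hx v), Complex.real_smul, mul_comm]
  · exact (dcDens_cont a x ha ha1 hx).measurable.ennreal_ofReal
  · simp

lemma dc_tilt_integrable {m : ℕ} (a x : Fin (m + 1) → ℝ) (ha : ∀ i, 0 < a i) (ha1 : 1 < a (Fin.last m))
    (hx : 0 < x (Fin.last m)) (l : ℝ) (hl : ∀ i, l * x i < 1) :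
    Integrable (fun v => Real.exp (l * v) * dcDens a x v) := by
  have hmX : Measurable (fun y : Fin (m + 1) → ℝ => ∑ i, x i * y i) := by fun_prop
  have h1 := dc_pi_integrable a x ha l hl
  have h2 : Integrable (fun v => Real.exp (l * v)) ((dcPi a).map (fun y => ∑ i, x i * y i)) := by
    rw [integrable_map_measure (Continuous.aestronglyMeasurable (by fun_prop)) hmX.aemeasurable]
    exact h1
  rw [dc_law a x ha ha1 hx, integrable_withDensity_iff (dcDens_cont a x ha ha1 hx).measurable.ennreal_ofReal (by simp)] at h2
  refine h2.congr (Filter.Eventually.of_forall fun v => ?_)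
  simp only
  rw [ENNReal.toReal_ofReal (dcDens_nonneg a x ha hx v)]

lemma dc_cf {m : ℕ} (α x : Fin (m + 1) → ℝ) (l : ℝ) (hl : ∀ i, l * x i < 1) (t : ℝ) :
    Complex.exp (∑ i, -((Function.update α (Fin.last m) (α (Fin.last m) + 1) i : ℝ) : ℂ) *
        Complex.log (1 - ((l : ℂ) + t * Complex.I) * x i))
      = ((Real.exp (-∑ i, α i * Real.log (1 - l * x i)) / (1 - l * x (Fin.last m)) : ℝ) : ℂ)
        * (dcPsi α (fun i => x i / (1 - l * x i)) (Fin.last m) t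
          * Complex.exp (((t * ∑ i, α i * (x i / (1 - l * x i)) : ℝ) : ℂ) * Complex.I)) := by
  have hp : ∀ i, 0 < 1 - l * x i := fun i => by linarith [hl i]
  set y : Fin (m + 1) → ℝ := fun i => x i / (1 - l * x i) with hy
  have hfac : ∀ i, (1 - ((l : ℂ) + t * Complex.I) * x i) = ((1 - l * x i : ℝ) : ℂ) * (1 - ((t * y i : ℝ) : ℂ) * Complex.I) := by
    intro i
    have : (1 - l * x i) * y i = x i := by rw [hy]; field_simp [(hp i).ne']
    have h2 : ((1 - l * x i : ℝ) : ℂ) * (y i : ℂ) = x i := by exact_mod_cast this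
    push_cast at h2 ⊢
    linear_combination (t : ℂ) * Complex.I * h2
  have hlog : ∀ i, Complex.log (1 - ((l : ℂ) + t * Complex.I) * x i)
      = (Real.log (1 - l * x i) : ℂ) + Complex.log (1 - ((t * y i : ℝ) : ℂ) * Complex.I) := by
    intro i
    rw [hfac, Complex.log_ofReal_mul (hp i) (dc_one_sub_ne _)]
  have hsum : ∑ i, -((Function.update α (Fin.last m) (α (Fin.last m) + 1) i : ℝ) : ℂ) *
        Complex.log (1 - ((l : ℂ) + t * Complex.I) * x i)
      = (∑ i, -(α i : ℂ) * Complex.log (1 - ((l : ℂ) + t * Complex.I) * x i))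
        - Complex.log (1 - ((l : ℂ) + t * Complex.I) * x (Fin.last m)) := by
    rw [Fin.sum_univ_castSucc, Fin.sum_univ_castSucc]
    simp
    ring
  rw [hsum, Complex.exp_sub, Complex.exp_log]
  swap
  · rw [hfac]; exact mul_ne_zero (by exact_mod_cast (hp _).ne') (dc_one_sub_ne _)
  rw [hfac (Fin.last m)]
  simp_rw [hlog]
  unfold dcPsi
  have e1 : ∑ i, -(α i : ℂ) * ((Real.log (1 - l * x i) : ℂ) + Complex.log (1 - ((t * y i : ℝ) : ℂ) * Complex.I))
      = ((-∑ i, α i * Real.log (1 - l * x i) : ℝ) : ℂ) + (∑ i, (α i : ℂ) * (-Complex.log (1 - ((t * y i : ℝ) : ℂ) * Complex.I)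
    - ((t * y i : ℝ) : ℂ) * Complex.I)) + ((t * ∑ i, α i * y i : ℝ) : ℂ) * Complex.I := by
    push_cast
    rw [Finset.mul_sum, Finset.sum_mul, ← Finset.sum_neg_distrib, ← Finset.sum_add_distrib, ← Finset.sum_add_distrib]
    exact Finset.sum_congr rfl fun i _ => by ring
  rw [e1, Complex.exp_add, Complex.exp_add]
  have h1 : ((1 - l * x (Fin.last m) : ℝ) : ℂ) ≠ 0 := by exact_mod_cast (hp _).ne'
  have h2 := dc_one_sub_ne (t * y (Fin.last m))
  rw [Complex.ofReal_div, Complex.ofReal_exp]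
  have hyv : (∑ i, α i * (x i / (1 - l * x i))) = ∑ i, α i * y i := rfl
  rw [hyv]
  have gen : ∀ A B D c u : ℂ, A * B * D / (c * u) = A / c * (B / u * D) := by
    intro A B D c u; ring
  exact gen _ _ _ _ _

lemma dc_inversion {m : ℕ} (α x : Fin (m + 1) → ℝ) (hα : ∀ i, 0 < α i)
    (hx : 0 < x (Fin.last m)) (l : ℝ) (hl : ∀ i, l * x i < 1)
    (hintg : Integrable (dcPsi α (fun i => x i / (1 - l * x i)) (Fin.last m))) :
    dcDens (Function.update α (Fin.last m) (α (Fin.last m) + 1)) x (∑ i, α i * (x i / (1 - l * x i)))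
      = Real.exp (-∑ i, α i * (l * x i / (1 - l * x i) + Real.log (1 - l * x i))) / (1 - l * x (Fin.last m))
        / (2 * π) * (∫ t, dcPsi α (fun i => x i / (1 - l * x i)) (Fin.last m) t).re := by
  set a := Function.update α (Fin.last m) (α (Fin.last m) + 1) with ha'
  have ha1 : 1 < a (Fin.last m) := by simp [ha', hα]
  have ha : ∀ i, 0 < a i := by
    intro i
    by_cases h : i = Fin.last m
    · subst h; linarith
    · rw [ha', Function.update_of_ne h]; exact hα i
  set Ψ := dcPsi α (fun i => x i / (1 - l * x i)) (Fin.last m) with hΨ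
  set V := ∑ i, α i * (x i / (1 - l * x i)) with hV
  set C : ℝ := Real.exp (-∑ i, α i * Real.log (1 - l * x i)) / (1 - l * x (Fin.last m)) with hC
  let f : ℝ → ℂ := fun v => ((Real.exp (l * v) * dcDens a x v : ℝ) : ℂ)
  have hfi : Integrable f := (dc_tilt_integrable a x ha ha1 hx l hl).ofReal
  have hfc : Continuous f := by
    have := dcDens_cont a x ha ha1 hx
    fun_prop
  have hF : 𝓕 f = fun ξ : ℝ => (C : ℂ) * (Ψ (-(2 * π) * ξ) * Complex.exp (((-(2 * π) * ξ * V : ℝ) : ℂ) * Complex.I)) := by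
    ext ξ
    rw [Real.fourier_real_eq_integral_exp_smul]
    rw [hC, hΨ, hV, ← dc_cf α x l hl, ← ha']
    rw [← dc_pi_cmgf a x ha _ (by simpa using hl)]
    rw [← dc_law_integral a x ha ha1 hx (fun v => Complex.exp (((l : ℂ) + ((-(2 * π) * ξ : ℝ) : ℂ) * Complex.I) * (v : ℂ))) (by fun_prop)]
    refine integral_congr_ae (Filter.Eventually.of_forall fun v => ?_)
    simp only [f, smul_eq_mul]
    push_cast
    rw [← mul_assoc, ← Complex.exp_add]
    congr 2
    ring
  have h2π : (-(2 * π)) ≠ 0 := by simp [Real.pi_ne_zero]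
  have hΨi : Integrable (fun ξ : ℝ => Ψ (-(2 * π) * ξ)) := hintg.comp_mul_left' h2π
  have hFi : Integrable (𝓕 f) := by
    rw [hF]
    refine Integrable.const_mul ?_ _
    refine Integrable.mono hΨi ?_ (Filter.Eventually.of_forall fun ξ => ?_)
    · exact hΨi.aestronglyMeasurable.mul (Continuous.aestronglyMeasurable (by fun_prop))
    · rw [norm_mul, Complex.norm_exp_ofReal_mul_I, mul_one]
  have hinv := hfi.fourierInv_fourier_eq hFi (v := V) hfc.continuousAt
  rw [Real.fourierInv_eq', hF] at hinv
  have h3 : ∫ ξ : ℝ, Complex.exp (((2 * π * inner ℝ ξ V : ℝ) : ℂ) * Complex.I) •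
      ((C : ℂ) * (Ψ (-(2 * π) * ξ) * Complex.exp (((-(2 * π) * ξ * V : ℝ) : ℂ) * Complex.I)))
      = ∫ ξ : ℝ, (C : ℂ) * Ψ (-(2 * π) * ξ) := by
    refine integral_congr_ae (Filter.Eventually.of_forall fun ξ => ?_)
    simp only [smul_eq_mul]
    have : Complex.exp (((2 * π * inner ℝ ξ V : ℝ) : ℂ) * Complex.I) *
      Complex.exp (((-(2 * π) * ξ * V : ℝ) : ℂ) * Complex.I) = 1 := by
      rw [← Complex.exp_add]
      simp only [RCLike.inner_apply, conj_trivial]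
      rw [← Complex.exp_zero]; congr 1; push_cast; ring
    linear_combination ((C : ℂ) * Ψ (-(2 * π) * ξ)) * this
  rw [h3, integral_const_mul, Measure.integral_comp_mul_left] at hinv
  have h4 := congrArg Complex.re hinv
  simp only [f, Complex.ofReal_re, Complex.re_ofReal_mul, Complex.smul_re, smul_eq_mul] at h4
  have habs : |(-(2 * π))⁻¹| = 1 / (2 * π) := by
    rw [abs_inv, abs_neg, abs_of_pos (by positivity)]; simp
  rw [habs] at h4
  have hfin : dcDens a x V = Real.exp (-(l * V)) * (Real.exp (l * V) * dcDens a x V) := by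
    rw [← mul_assoc, ← Real.exp_add]; simp
  rw [hfin, ← h4, hC]
  have e : Real.exp (-∑ i, α i * (l * x i / (1 - l * x i) + Real.log (1 - l * x i)))
      = Real.exp (-(l * V)) * Real.exp (-∑ i, α i * Real.log (1 - l * x i)) := by
    rw [← Real.exp_add]; congr 1
    rw [hV, Finset.mul_sum, ← neg_add, ← Finset.sum_add_distrib]
    congr 1; exact Finset.sum_congr rfl fun i _ => by ring
  rw [e]
  ring

lemma dc_vol_lintegral {m : ℕ} (F : (Fin (m + 1) → ℝ) → ℝ≥0∞) (hF : Measurable F) :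
    ∫⁻ y, F y = ∫⁻ y' : Fin m → ℝ, ∫⁻ t : ℝ, F (Fin.snoc y' t) := by
  have h := (volume_preserving_piFinSuccAbove (fun _ : Fin (m + 1) => ℝ) (Fin.last m)).symm
  have h2 := h.lintegral_comp_emb (MeasurableEquiv.measurableEmbedding _) F
  rw [← h2, Measure.volume_eq_prod, lintegral_prod_symm]
  · refine lintegral_congr fun y' => ?_
    refine lintegral_congr fun t => ?_
    congr 1
    simp [MeasurableEquiv.piFinSuccAbove_symm_apply, Fin.insertNthEquiv]
  · exact (hF.comp (MeasurableEquiv.measurable _)).aemeasurable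

lemma dc_pi_density {n : ℕ} (a : Fin n → ℝ) (ha : ∀ i, 0 < a i)
    (F : (Fin n → ℝ) → ℝ≥0∞) (hF : Measurable F) :
    ∫⁻ y, F y ∂(dcPi a) = ∫⁻ y, F y * ∏ i, ENNReal.ofReal (gammaPDFReal (a i) 1 (y i)) := by
  induction n with
  | zero =>
    unfold dcPi
    rw [volume_pi]
    simp only [Finset.univ_eq_empty, Finset.prod_empty, mul_one]
    rw [Measure.pi_of_empty, Measure.pi_of_empty]
  | succ m ih =>
    have hpm : ∀ i : Fin (m + 1), Measurable fun t => ENNReal.ofReal (gammaPDFReal (a i) 1 t) :=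
      fun i => (measurable_gammaPDFReal _ 1).ennreal_ofReal
    rw [dc_pi_lintegral a ha F hF, ih (fun j => a j.castSucc) (fun j => ha _)]
    · rw [dc_vol_lintegral]
      · refine lintegral_congr fun y' => ?_
        rw [← lintegral_mul_const]
        · refine lintegral_congr fun t => ?_
          rw [Fin.prod_univ_castSucc]
          simp only [Fin.snoc_castSucc, Fin.snoc_last]
          ring
        · have h1 : Measurable fun t : ℝ => (Fin.snoc y' t : Fin (m + 1) → ℝ) :=
            dc_snoc_meas.comp (by fun_prop : Measurable fun t : ℝ => (y', t))
          exact (hF.comp h1).mul (hpm _)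
      · refine hF.mul (Finset.measurable_fun_prod _ fun i _ => (hpm i).comp (measurable_pi_apply i))
    · refine Measurable.lintegral_prod_right' (f := fun p : (Fin m → ℝ) × ℝ => F (Fin.snoc p.1 p.2) * ENNReal.ofReal (gammaPDFReal (a (Fin.last m)) 1 p.2)) ?_
      exact (hF.comp dc_snoc_meas).mul ((hpm _).comp measurable_snd)

lemma dc_dens_scale {m : ℕ} (a : Fin (m + 1) → ℝ) (x : Fin m → ℝ) (S : ℝ) (hS : 0 < S) :
    (∏ i, gammaPDFReal (a i) 1 ((Fin.snoc (S • x) (S - ∑ i, (S • x) i) : Fin (m + 1) → ℝ) i))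
      = ((∏ i, 1 / Real.Gamma (a i)) * (S ^ (∑ i, (a i - 1)) * Real.exp (-S))) * dirichletDensity m a x := by
  have hlast : S - ∑ i, (S • x) i = S * (1 - ∑ i, x i) := by
    simp only [Pi.smul_apply, smul_eq_mul, ← Finset.mul_sum]; ring
  rw [hlast]
  unfold dirichletDensity
  by_cases h : x ∈ {x : Fin m → ℝ | (∀ i, 0 ≤ x i) ∧ ∑ i, x i ≤ 1}
  · rw [indicator_of_mem h]
    obtain ⟨h1, h2⟩ := h
    have h3 : 0 ≤ 1 - ∑ i, x i := by linarith
    set w : Fin (m + 1) → ℝ := Fin.snoc x (1 - ∑ i, x i) with hw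
    have hw0 : ∀ i, 0 ≤ w i := by
      intro i
      refine Fin.lastCases ?_ (fun j => ?_) i
      · rw [hw, Fin.snoc_last]; exact h3
      · rw [hw, Fin.snoc_castSucc]; exact h1 j
    have e1 : (Fin.snoc (S • x) (S * (1 - ∑ i, x i)) : Fin (m + 1) → ℝ) = fun i => S * w i := by
      ext i
      refine Fin.lastCases ?_ (fun j => ?_) i
      · rw [hw, Fin.snoc_last, Fin.snoc_last]
      · rw [hw, Fin.snoc_castSucc, Fin.snoc_castSucc]; rfl
    have hsum : ∑ i, w i = 1 := by
      rw [Fin.sum_univ_castSucc]; simp [hw]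
    have e2 : (∏ i : Fin m, x i ^ (a i.castSucc - 1)) * (1 - ∑ i, x i) ^ (a (Fin.last m) - 1)
        = ∏ i, w i ^ (a i - 1) := by
      rw [Fin.prod_univ_castSucc]; simp [hw]
    rw [e1, e2]
    have e3 : ∀ i, gammaPDFReal (a i) 1 (S * w i)
        = (1 / Real.Gamma (a i)) * (S ^ (a i - 1) * w i ^ (a i - 1) * Real.exp (-(S * w i))) := by
      intro i
      unfold gammaPDFReal
      rw [if_pos (mul_nonneg hS.le (hw0 i)), Real.mul_rpow hS.le (hw0 i)]
      simp; ring
    simp only [e3]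
    rw [Finset.prod_mul_distrib, Finset.prod_mul_distrib, Finset.prod_mul_distrib, ← Real.exp_sum,
      Finset.sum_neg_distrib, ← Finset.mul_sum, hsum, ← Real.rpow_sum_of_pos hS]
    ring_nf
  · rw [indicator_of_notMem h, mul_zero]
    rw [Finset.prod_eq_zero_iff]
    by_cases h1 : ∀ i, 0 ≤ x i
    · have h2 : ¬ (∑ i, x i ≤ 1) := fun h2 => h ⟨h1, h2⟩
      refine ⟨Fin.last m, Finset.mem_univ _, ?_⟩
      rw [Fin.snoc_last]
      unfold gammaPDFReal
      rw [if_neg]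
      have : S * (1 - ∑ i, x i) < 0 := mul_neg_of_pos_of_neg hS (by linarith)
      linarith
    · push Not at h1
      obtain ⟨i, hi⟩ := h1
      refine ⟨i.castSucc, Finset.mem_univ _, ?_⟩
      rw [Fin.snoc_castSucc]
      unfold gammaPDFReal
      rw [if_neg]
      have : S * x i < 0 := mul_neg_of_pos_of_neg hS hi
      simpa using this

lemma dc_dens_neg {m : ℕ} (a : Fin (m + 1) → ℝ) (y : Fin m → ℝ) (S : ℝ) (hS : S < 0) :
    (∏ i, ENNReal.ofReal (gammaPDFReal (a i) 1 ((Fin.snoc y (S - ∑ i, y i) : Fin (m + 1) → ℝ) i))) = 0 := by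
  rw [Finset.prod_eq_zero_iff]
  by_cases h1 : ∀ i, 0 ≤ y i
  · refine ⟨Fin.last m, Finset.mem_univ _, ?_⟩
    rw [Fin.snoc_last]
    unfold gammaPDFReal
    rw [if_neg]
    · simp
    have : 0 ≤ ∑ i, y i := Finset.sum_nonneg fun i _ => h1 i
    linarith
  · push Not at h1
    obtain ⟨i, hi⟩ := h1
    refine ⟨i.castSucc, Finset.mem_univ _, ?_⟩
    rw [Fin.snoc_castSucc]
    unfold gammaPDFReal
    rw [if_neg]
    · simp
    linarith

lemma dc_vol_scale {m : ℕ} (F : (Fin m → ℝ) → ℝ≥0∞) (S : ℝ) (hS : 0 < S) :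
    ∫⁻ y, F y = ENNReal.ofReal (S ^ m) * ∫⁻ x, F (S • x) := by
  have h := Measure.map_addHaar_smul (volume : Measure (Fin m → ℝ)) hS.ne'
  have h2 : ∫⁻ x, F (S • x) = ∫⁻ y, F y ∂(Measure.map (S • ·) (volume : Measure (Fin m → ℝ))) := by
    have hme : MeasurableEmbedding (fun x : Fin m → ℝ => S • x) :=
      (Homeomorph.smulOfNeZero S hS.ne').measurableEmbedding
    rw [hme.lintegral_map]
  rw [h2, h, lintegral_smul_measure, smul_eq_mul, ← mul_assoc, ← ENNReal.ofReal_mul (by positivity)]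
  rw [abs_of_pos (by positivity)]
  simp only [Module.finrank_fintype_fun_eq_card, Fintype.card_fin]
  rw [mul_inv_cancel₀ (by positivity)]
  simp

lemma dc_main_scale {m : ℕ} (a : Fin (m + 1) → ℝ) (ha : ∀ i, 0 < a i) :
    ∃ Z : ℝ≥0∞, ∀ K : (Fin (m + 1) → ℝ) → ℝ≥0∞, Measurable K →
      (∀ (S : ℝ) (w), 0 < S → K (S • w) = K w) →
      ∫⁻ y, K y ∂(dcPi a) = Z * ∫⁻ x, K (Fin.snoc x (1 - ∑ i, x i)) ∂(dirichletBase m a) := by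
  set c : ℝ → ℝ := fun S => (∏ i, 1 / Real.Gamma (a i)) * (S ^ (∑ i, (a i - 1)) * Real.exp (-S)) with hc
  have hG : 0 ≤ (∏ i, 1 / Real.Gamma (a i)) := Finset.prod_nonneg fun i _ => by
    have := Real.Gamma_pos_of_pos (ha i); positivity
  have hcm : Measurable c := by rw [hc]; fun_prop
  refine ⟨∫⁻ S in Ioi 0, ENNReal.ofReal (S ^ m) * ENNReal.ofReal (c S), fun K hK hKS => ?_⟩
  have hpm : ∀ i : Fin (m + 1), Measurable fun t => ENNReal.ofReal (gammaPDFReal (a i) 1 t) :=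
      fun i => (measurable_gammaPDFReal _ 1).ennreal_ofReal
  set Q : (Fin (m + 1) → ℝ) → ℝ≥0∞ := fun y => K y * ∏ i, ENNReal.ofReal (gammaPDFReal (a i) 1 (y i)) with hQ
  have hQm : Measurable Q := hK.mul (Finset.measurable_fun_prod _ fun i _ => (hpm i).comp (measurable_pi_apply i))
  have hdm : Measurable (dirichletDensity m a) := by
    unfold dirichletDensity
    refine Measurable.indicator (by fun_prop) ?_
    have hset : {x : Fin m → ℝ | (∀ i, 0 ≤ x i) ∧ ∑ i, x i ≤ 1} = (⋂ i, {x : Fin m → ℝ | 0 ≤ x i}) ∩ {x : Fin m → ℝ | ∑ i, x i ≤ 1} := by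
      ext; simp
    rw [hset]
    refine MeasurableSet.inter ?_ ?_
    · exact MeasurableSet.iInter fun i => measurableSet_le measurable_const (measurable_pi_apply i)
    · exact measurableSet_le (by fun_prop) measurable_const
  have hsn : Measurable fun x : Fin m → ℝ => (Fin.snoc x (1 - ∑ i, x i) : Fin (m + 1) → ℝ) :=
    dc_snoc_meas.comp (by fun_prop : Measurable fun x : Fin m → ℝ => (x, 1 - ∑ i, x i))
  rw [dc_pi_density a ha K hK, dc_vol_lintegral _ hQm]
  have t1 : ∀ y' : Fin m → ℝ, ∫⁻ t : ℝ, Q (Fin.snoc y' t) = ∫⁻ S : ℝ, Q (Fin.snoc y' (S - ∑ i, y' i)) := by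
    intro y'
    exact (lintegral_sub_right_eq_self (fun t => Q (Fin.snoc y' t)) (∑ i, y' i)).symm
  rw [lintegral_congr t1, lintegral_lintegral_swap]
  swap
  · refine Measurable.aemeasurable ?_
    refine hQm.comp (dc_snoc_meas.comp (by fun_prop : Measurable fun p : (Fin m → ℝ) × ℝ => (p.1, p.2 - ∑ i, p.1 i)))
  rw [← lintegral_mul_const]
  swap
  · fun_prop
  rw [← lintegral_indicator measurableSet_Ioi]
  refine lintegral_congr_ae ?_
  have hne : ∀ᵐ S : ℝ, S ≠ 0 := by
    rw [ae_iff]; simp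
  filter_upwards [hne] with S hS0
  rcases lt_or_gt_of_ne hS0 with hS | hS
  · rw [indicator_of_notMem (by simp [hS.le])]
    rw [lintegral_eq_zero_iff']
    · refine Filter.Eventually.of_forall fun y' => ?_
      simp only [hQ]
      rw [dc_dens_neg a y' S hS]; simp
    · refine Measurable.aemeasurable ?_
      exact hQm.comp (dc_snoc_meas.comp (by fun_prop : Measurable fun p : (Fin m → ℝ) => (p, S - ∑ i, p i)))
  · rw [indicator_of_mem (show S ∈ Ioi 0 from hS), dc_vol_scale _ S hS, mul_assoc]
    congr 1
    unfold dirichletBase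
    have hwd := lintegral_withDensity_eq_lintegral_mul (volume : Measure (Fin m → ℝ)) hdm.ennreal_ofReal (hK.comp hsn)
    simp only [Function.comp] at hwd
    rw [hwd, ← lintegral_const_mul]
    swap
    · exact hdm.ennreal_ofReal.mul (hK.comp hsn)
    refine lintegral_congr fun x => ?_
    simp only [hQ, Pi.mul_apply, Function.comp]
    rw [← ENNReal.ofReal_prod_of_nonneg fun i _ => gammaPDFReal_nonneg (ha i) one_pos _, dc_dens_scale a x S hS,
      ENNReal.ofReal_mul (by positivity)]
    have e1 : (Fin.snoc (S • x) (S - ∑ i, (S • x) i) : Fin (m + 1) → ℝ) = S • Fin.snoc x (1 - ∑ i, x i) := by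
      ext i
      refine Fin.lastCases ?_ (fun j => ?_) i
      · simp only [Pi.smul_apply, smul_eq_mul, ← Finset.mul_sum, Fin.snoc_last]; ring
      · simp
    rw [e1, hKS S _ hS]
    ring

lemma dc_dirichlet {m : ℕ} (a : Fin (m + 1) → ℝ) (ha : ∀ i, 0 < a i) (f : Fin (m + 1) → ℝ) (μ : ℝ) :
    dirichlet m a {w | μ ≤ ∑ l, f l * w l} = dcPi a {y | 0 ≤ ∑ i, (f i - μ) * y i} := by
  obtain ⟨Z, hZ⟩ := dc_main_scale a ha
  have hp := dcPi_prob a ha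
  have h1 := hZ (fun _ => 1) measurable_const (fun _ _ _ => rfl)
  simp only [lintegral_const, one_mul, measure_univ] at h1
  have hZ' : Z = (dirichletBase m a univ)⁻¹ := ENNReal.eq_inv_of_mul_eq_one_left h1.symm
  have hsn : Measurable fun x : Fin m → ℝ => (Fin.snoc x (1 - ∑ i, x i) : Fin (m + 1) → ℝ) :=
    dc_snoc_meas.comp (by fun_prop : Measurable fun x : Fin m → ℝ => (x, 1 - ∑ i, x i))
  have hC : MeasurableSet {y : Fin (m + 1) → ℝ | 0 ≤ ∑ i, (f i - μ) * y i} :=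
    measurableSet_le measurable_const (by fun_prop)
  have hD : MeasurableSet {w : Fin (m + 1) → ℝ | μ ≤ ∑ l, f l * w l} :=
    measurableSet_le measurable_const (by fun_prop)
  have h2 := hZ ({y | 0 ≤ ∑ i, (f i - μ) * y i}.indicator 1) (measurable_one.indicator hC) ?_
  · rw [lintegral_indicator_one hC] at h2
    rw [h2, hZ']
    unfold dirichlet
    rw [Measure.map_apply hsn hD, Measure.smul_apply, smul_eq_mul]
    congr 1
    rw [← lintegral_indicator_one (hsn hD)]
    refine lintegral_congr fun x => ?_
    have hs : ∑ i, (Fin.snoc x (1 - ∑ i, x i) : Fin (m + 1) → ℝ) i = 1 := by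
      rw [Fin.sum_univ_castSucc]; simp
    set w := (Fin.snoc x (1 - ∑ i, x i) : Fin (m + 1) → ℝ) with hw
    have hs2 : ∑ i, (f i - μ) * w i = ∑ i, f i * w i - μ := by
      simp only [sub_mul, Finset.sum_sub_distrib, ← Finset.mul_sum, hs, mul_one]
    by_cases hh : μ ≤ ∑ i, f i * w i
    · rw [indicator_of_mem (show x ∈ _ from hh), indicator_of_mem (show w ∈ {y : Fin (m + 1) → ℝ | 0 ≤ ∑ i, (f i - μ) * y i} from (by linarith : 0 ≤ ∑ i, (f i - μ) * w i))]
      rfl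
    · rw [indicator_of_notMem (show x ∉ _ from hh), indicator_of_notMem (show w ∉ {y : Fin (m + 1) → ℝ | 0 ≤ ∑ i, (f i - μ) * y i} from (by linarith : ¬ 0 ≤ ∑ i, (f i - μ) * w i))]
  · intro S w hS
    have e : ∑ i, (f i - μ) * (S • w) i = S * ∑ i, (f i - μ) * w i := by
      rw [Finset.mul_sum]; exact Finset.sum_congr rfl fun i _ => by simp; ring
    by_cases hh : 0 ≤ ∑ i, (f i - μ) * w i
    · rw [indicator_of_mem (show w ∈ {y : Fin (m + 1) → ℝ | 0 ≤ ∑ i, (f i - μ) * y i} from hh),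
        indicator_of_mem (show S • w ∈ {y : Fin (m + 1) → ℝ | 0 ≤ ∑ i, (f i - μ) * y i} from by
          change 0 ≤ ∑ i, (f i - μ) * (S • w) i
          rw [e]; positivity)]
      rfl
    · rw [indicator_of_notMem (show w ∉ {y : Fin (m + 1) → ℝ | 0 ≤ ∑ i, (f i - μ) * y i} from hh),
        indicator_of_notMem]
      change ¬ 0 ≤ ∑ i, (f i - μ) * (S • w) i
      rw [e]
      have := mul_neg_of_pos_of_neg hS (not_le.1 hh)
      linarith

lemma dc_c0_ge : 72 * π ≤ c0 := by
  have h6 : (2.4 : ℝ) ≤ Real.sqrt 6 := Real.le_sqrt_of_sq_le (by norm_num)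
  have hpi : π < 3.15 := Real.pi_lt_d2
  have hpi0 := Real.pi_pos
  unfold c0
  rw [div_mul_eq_mul_div, le_div_iff₀ hpi0]
  have : (18.9 : ℝ) ≤ 8 + 49 * Real.sqrt 6 / 9 := by linarith
  nlinarith

def dcV {m : ℕ} (α x : Fin (m + 1) → ℝ) (l : ℝ) : ℝ := ∑ i, α i * (x i / (1 - l * x i))
def dcQ {m : ℕ} (α x : Fin (m + 1) → ℝ) (l : ℝ) : ℝ := ∑ i, α i * (x i / (1 - l * x i)) ^ 2
def dcH {m : ℕ} (α x : Fin (m + 1) → ℝ) (l : ℝ) : ℝ :=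
  ∑ i, α i * (l * x i / (1 - l * x i) + Real.log (1 - l * x i))

structure dcHyp {m : ℕ} (α x : Fin (m + 1) → ℝ) : Prop where
  pos : ∀ i, 0 < α i
  neg0 : x 0 < 0
  posm : 0 < x (Fin.last m)
  lo : ∀ i, x 0 ≤ x i
  hi : ∀ i, x i ≤ x (Fin.last m)

lemma dc_mul_lt {m : ℕ} {α x : Fin (m + 1) → ℝ} (h : dcHyp α x) {l : ℝ} (h0 : l * x 0 < 1)
    (hm : l * x (Fin.last m) < 1) (i) : l * x i < 1 := by
  rcases le_total 0 l with hl | hl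
  · have := mul_le_mul_of_nonneg_left (h.hi i) hl; linarith
  · have := mul_le_mul_of_nonpos_left (h.lo i) hl; linarith

lemma dc_Q_pos {m : ℕ} {α x : Fin (m + 1) → ℝ} (h : dcHyp α x) {l : ℝ} (h0 : l * x 0 < 1) : 0 < dcQ α x l := by
  unfold dcQ
  refine Finset.sum_pos' (fun i _ => ?_) ⟨0, Finset.mem_univ _, ?_⟩
  · have := h.pos i; positivity
  · have := h.pos 0
    have h1 : x 0 / (1 - l * x 0) ≠ 0 := div_ne_zero h.neg0.ne (by linarith)
    positivity

lemma dc_y_mono {l u v : ℝ} (hu : l * u < 1) (hv : l * v < 1) (huv : u ≤ v) :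
    u / (1 - l * u) ≤ v / (1 - l * v) := by
  rw [div_le_div_iff₀ (by linarith) (by linarith)]
  nlinarith

lemma dc_density_bounds {m : ℕ} {α x : Fin (m + 1) → ℝ} (h : dcHyp α x) {l : ℝ} (h0 : l * x 0 < 1)
    (hm : l * x (Fin.last m) < 1) (ε : ℝ) (hε : 0 < ε) (hε1 : ε < 1)
    (hmin : c0 / ε ^ 2 ≤ min (α 0) (α (Fin.last m))) :
    (1 - ε) * (Real.exp (-dcH α x l) / (√(2 * π) * (√(dcQ α x l) * (1 - l * x (Fin.last m)))))
      ≤ dcDens (Function.update α (Fin.last m) (α (Fin.last m) + 1)) x (dcV α x l) ∧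
    dcDens (Function.update α (Fin.last m) (α (Fin.last m) + 1)) x (dcV α x l) ≤
      (1 + ε) * (Real.exp (-dcH α x l) / (√(2 * π) * (√(dcQ α x l) * (1 - l * x (Fin.last m))))) := by
  have hl := dc_mul_lt h h0 hm
  set s := √(dcQ α x l) with hs
  have hQ := dc_Q_pos h h0
  have hs0 : 0 < s := Real.sqrt_pos.2 hQ
  have hs2 : dcQ α x l = s ^ 2 := (Real.sq_sqrt hQ.le).symm
  set A := min (α 0) (α (Fin.last m)) with hA
  have hpi := Real.pi_pos
  have hpi3 := Real.pi_gt_three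
  have hc0 := dc_c0_ge
  have hA1 : c0 ≤ ε ^ 2 * A := by
    rw [div_le_iff₀ (by positivity)] at hmin; linarith
  have hA0 : 0 < A := by
    rw [hA]; exact lt_min (h.pos _) (h.pos _)
  have hA8 : 8 ≤ A := by
    have : ε ^ 2 ≤ 1 := by nlinarith
    nlinarith
  set η := 1 / √A with hη
  have hη0 : 0 < η := by positivity
  have hη2 : η ^ 2 = 1 / A := by rw [hη, div_pow, Real.sq_sqrt hA0.le]; norm_num
  set y : Fin (m + 1) → ℝ := fun i => x i / (1 - l * x i) with hy
  have hQi : ∀ i, α i * y i ^ 2 ≤ s ^ 2 := by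
    intro i
    rw [← hs2]
    unfold dcQ
    exact Finset.single_le_sum (f := fun i => α i * (x i / (1 - l * x i)) ^ 2)
      (fun j _ => by have := h.pos j; positivity) (Finset.mem_univ i)
  have hkey : ∀ i, A ≤ α i → |y i| ≤ η * s := by
    intro i hi
    refine abs_le_of_sq_le_sq ?_ (by positivity)
    rw [mul_pow, hη2, div_mul_eq_mul_div, one_mul, le_div_iff₀ hA0]
    nlinarith [hQi i, sq_nonneg (y i)]
  have hy0 := hkey 0 (min_le_left _ _)
  have hym := hkey (Fin.last m) (min_le_right _ _)
  have hyi : ∀ i, |y i| ≤ η * s := by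
    intro i
    have h1 : y 0 ≤ y i := dc_y_mono (hl 0) (hl i) (h.lo i)
    have h2 : y i ≤ y (Fin.last m) := dc_y_mono (hl i) (hl _) (h.hi i)
    rw [abs_le] at *
    constructor <;> linarith [hy0.1, hym.2]
  obtain ⟨hintg, hR⟩ := dc_Psi_main α y (Fin.last m) η s h.pos hs0 hs2 (by
    rw [hη2]; exact one_div_le_one_div_of_le (by norm_num) hA8) hyi
  have hinv := dc_inversion α x h.pos h.posm l hl hintg
  change dcDens _ x (dcV α x l) = Real.exp (-dcH α x l) / _ / _ * _ at hinv
  rw [hinv]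
  set R := (∫ t, dcPsi α y (Fin.last m) t).re with hRdef
  have hη12 : 12 * π * η ≤ ε * √(2 * π) := by
    refine (pow_le_pow_iff_left₀ (by positivity) (by positivity) two_ne_zero).1 ?_
    rw [mul_pow, hη2, mul_pow ε, Real.sq_sqrt (by positivity), mul_one_div, div_le_iff₀ hA0]
    nlinarith
  have hR2 : |R - √(2 * π) / s| ≤ ε * √(2 * π) / s := hR.trans (by gcongr)
  have hq : √(2 * π) ^ 2 = 2 * π := Real.sq_sqrt (by positivity)
  have hq0 : 0 < √(2 * π) := by positivity
  have hu : 0 < 1 - l * x (Fin.last m) := by linarith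
  set E := Real.exp (-dcH α x l) with hE
  have hE0 : 0 < E := Real.exp_pos _
  have hT : ∀ c : ℝ, c * (E / (√(2 * π) * (s * (1 - l * x (Fin.last m)))))
      = E / (1 - l * x (Fin.last m)) / (2 * π) * (c * √(2 * π) / s) := by
    intro c
    have hpe : E / (1 - l * x (Fin.last m)) / (2 * π) = E / (1 - l * x (Fin.last m)) / √(2 * π) ^ 2 := by rw [hq]
    rw [hpe]; field_simp
  rw [hT, hT]
  rw [abs_le] at hR2
  have e1 : (1 - ε) * √(2 * π) / s = √(2 * π) / s - ε * √(2 * π) / s := by ring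
  have e2 : (1 + ε) * √(2 * π) / s = √(2 * π) / s + ε * √(2 * π) / s := by ring
  constructor
  · refine mul_le_mul_of_nonneg_left ?_ (by positivity); rw [e1]; linarith [hR2.1]
  · refine mul_le_mul_of_nonneg_left ?_ (by positivity); rw [e2]; linarith [hR2.2]

def dch (z : ℝ) : ℝ := z / (1 - z) + Real.log (1 - z)

lemma dch_deriv (z : ℝ) (hz : z < 1) : HasDerivAt dch (z / (1 - z) ^ 2) z := by
  have h1 : HasDerivAt (fun z : ℝ => 1 - z) (-1) z := by
    simpa using (hasDerivAt_id z).const_sub 1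
  have hne : 1 - z ≠ 0 := by linarith
  have h2 := ((hasDerivAt_id z).div h1 hne).add (h1.log hne)
  refine h2.congr_deriv ?_
  simp only [id]
  field_simp
  ring

lemma dch_mono1 : MonotoneOn (fun z => dch z - z ^ 2 / 2) (Iio 1) := by
  have hd : ∀ z : ℝ, z < 1 → HasDerivAt (fun z => dch z - z ^ 2 / 2) (z / (1 - z) ^ 2 - z) z := by
    intro z hz
    refine ((dch_deriv z hz).sub (((hasDerivAt_id z).pow 2).div_const 2)).congr_deriv ?_
    simp
  refine monotoneOn_of_deriv_nonneg (convex_Iio 1) (fun z hz => (hd z hz).continuousAt.continuousWithinAt) ?_ ?_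
  · rw [interior_Iio]; exact fun z hz => (hd z hz).differentiableAt.differentiableWithinAt
  · rw [interior_Iio]; intro z hz
    rw [(hd z hz).deriv]
    have hz' : z < 1 := hz
    have hp : 0 < (1 - z) ^ 2 := by have : 0 < 1 - z := by linarith
                                    positivity
    rw [sub_nonneg, le_div_iff₀ hp]
    rcases le_total 0 z with h | h
    · have : (1 - z) ^ 2 ≤ 1 := pow_le_one₀ (by linarith) (by linarith)
      nlinarith
    · nlinarith [mul_nonneg_of_nonpos_of_nonpos h h]

lemma dch_mono2 : MonotoneOn (fun z => z ^ 2 / (2 * (1 - z) ^ 2) - dch z) (Iio 1) := by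
  have hd : ∀ z : ℝ, z < 1 → HasDerivAt (fun z => z ^ 2 / (2 * (1 - z) ^ 2) - dch z) (z ^ 2 / (1 - z) ^ 3) z := by
    intro z hz
    have h1 : HasDerivAt (fun z : ℝ => 1 - z) (-1) z := by
      simpa using (hasDerivAt_id z).const_sub 1
    have hne : 1 - z ≠ 0 := by linarith
    refine ((((hasDerivAt_id z).pow 2).div ((h1.pow 2).const_mul 2) (mul_ne_zero two_ne_zero (pow_ne_zero 2 hne))).sub (dch_deriv z hz)).congr_deriv ?_
    simp
    field_simp
    ring
  refine monotoneOn_of_deriv_nonneg (convex_Iio 1) (fun z hz => (hd z hz).continuousAt.continuousWithinAt) ?_ ?_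
  · rw [interior_Iio]; exact fun z hz => (hd z hz).differentiableAt.differentiableWithinAt
  · rw [interior_Iio]; intro z hz
    rw [(hd z hz).deriv]
    have hz' : 0 < 1 - z := by have : z < 1 := hz
                               linarith
    positivity

lemma dch_zero : dch 0 = 0 := by simp [dch]

lemma dch_ge_sq {z : ℝ} (h : 0 ≤ z) (hz : z < 1) : z ^ 2 ≤ 2 * dch z := by
  have := dch_mono1 (show (0 : ℝ) ∈ Iio 1 by simp) hz h
  simp [dch_zero] at this; linarith
lemma dch_le_sq {z : ℝ} (h : z ≤ 0) : 2 * dch z ≤ z ^ 2 := by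
  have := dch_mono1 (show z ∈ Iio 1 from lt_of_le_of_lt h one_pos) (show (0 : ℝ) ∈ Iio 1 by simp) h
  simp [dch_zero] at this; linarith
lemma dch_le_q {z : ℝ} (h : 0 ≤ z) (hz : z < 1) : 2 * dch z ≤ z ^ 2 / (1 - z) ^ 2 := by
  have := dch_mono2 (show (0 : ℝ) ∈ Iio 1 by simp) hz h
  simp only [dch_zero] at this
  have e : z ^ 2 / (1 - z) ^ 2 = 2 * (z ^ 2 / (2 * (1 - z) ^ 2)) := by
    rw [← mul_div_assoc, mul_div_mul_left _ _ two_ne_zero]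
  rw [e]; norm_num at this; linarith
lemma dch_ge_q {z : ℝ} (h : z ≤ 0) : z ^ 2 / (1 - z) ^ 2 ≤ 2 * dch z := by
  have := dch_mono2 (show z ∈ Iio 1 from lt_of_le_of_lt h one_pos) (show (0 : ℝ) ∈ Iio 1 by simp) h
  simp only [dch_zero] at this
  have e : z ^ 2 / (1 - z) ^ 2 = 2 * (z ^ 2 / (2 * (1 - z) ^ 2)) := by
    rw [← mul_div_assoc, mul_div_mul_left _ _ two_ne_zero]
  rw [e]; norm_num at this; linarith

lemma dch_nonneg {z : ℝ} (hz : z < 1) : 0 ≤ dch z := by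
  rcases le_total 0 z with h | h
  · nlinarith [dch_ge_sq h hz, sq_nonneg z]
  · have := dch_ge_q h
    have : 0 ≤ z ^ 2 / (1 - z) ^ 2 := by positivity
    linarith

lemma dch_lower {z : ℝ} (hz : z < 1) : ((√(1 - z))⁻¹ - 1) ^ 2 ≤ dch z := by
  have hu : 0 < 1 - z := by linarith
  have hr : 0 < √(1 - z) := Real.sqrt_pos.2 hu
  have h1 : Real.log (√(1 - z))⁻¹ ≤ (√(1 - z))⁻¹ - 1 := Real.log_le_sub_one_of_pos (by positivity)
  rw [Real.log_inv, Real.log_sqrt hu.le] at h1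
  have h2 : z / (1 - z) = ((√(1 - z))⁻¹) ^ 2 - 1 := by
    rw [inv_pow, Real.sq_sqrt hu.le]; field_simp; ring
  unfold dch
  rw [h2]
  linarith

lemma dcH_eq {m : ℕ} (α x : Fin (m + 1) → ℝ) (l : ℝ) : dcH α x l = ∑ i, α i * dch (l * x i) := rfl

lemma dc_H_ge {m : ℕ} {α x : Fin (m + 1) → ℝ} (h : dcHyp α x) {l : ℝ} (hl : 0 ≤ l)
    (hm : l * x (Fin.last m) < 1) :
    l ^ 2 * dcQ α x l * (1 - l * x (Fin.last m)) ^ 2 ≤ 2 * dcH α x l := by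
  have h0 : l * x 0 < 1 := by nlinarith [h.neg0]
  rw [dcH_eq, dcQ, Finset.mul_sum, Finset.mul_sum, Finset.sum_mul]
  refine Finset.sum_le_sum fun i _ => ?_
  have hi := dc_mul_lt h h0 hm i
  have hzm : l * x i ≤ l * x (Fin.last m) := mul_le_mul_of_nonneg_left (h.hi i) hl
  have hzm0 : 0 ≤ l * x (Fin.last m) := mul_nonneg hl h.posm.le
  have hp : 0 < 1 - l * x i := by linarith
  have e : l ^ 2 * (α i * (x i / (1 - l * x i)) ^ 2) * (1 - l * x (Fin.last m)) ^ 2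
      = α i * ((l * x i) ^ 2 / (1 - l * x i) ^ 2 * (1 - l * x (Fin.last m)) ^ 2) := by field_simp
  rw [e, mul_left_comm 2]
  refine mul_le_mul_of_nonneg_left ?_ (h.pos i).le
  rcases le_total 0 (l * x i) with hz | hz
  · refine le_trans ?_ (dch_ge_sq hz hi)
    rw [div_mul_eq_mul_div, div_le_iff₀ (by positivity)]
    exact mul_le_mul_of_nonneg_left (pow_le_pow_left₀ (by linarith) (by linarith) 2) (sq_nonneg _)
  · refine le_trans ?_ (dch_ge_q hz)
    exact mul_le_of_le_one_right (by positivity) (pow_le_one₀ (by linarith) (by linarith))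

lemma dc_H_le {m : ℕ} {α x : Fin (m + 1) → ℝ} (h : dcHyp α x) {l : ℝ} (hl : l ≤ 0)
    (h0 : l * x 0 < 1) :
    2 * dcH α x l ≤ l ^ 2 * dcQ α x l * (1 - l * x (Fin.last m)) ^ 2 := by
  have hm : l * x (Fin.last m) < 1 := by nlinarith [h.posm]
  rw [dcH_eq, dcQ, Finset.mul_sum, Finset.mul_sum, Finset.sum_mul]
  refine Finset.sum_le_sum fun i _ => ?_
  have hi := dc_mul_lt h h0 hm i
  have hzm : l * x (Fin.last m) ≤ l * x i := mul_le_mul_of_nonpos_left (h.hi i) hl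
  have hzm0 : l * x (Fin.last m) ≤ 0 := mul_nonpos_of_nonpos_of_nonneg hl h.posm.le
  have hp : 0 < 1 - l * x i := by linarith
  have e : l ^ 2 * (α i * (x i / (1 - l * x i)) ^ 2) * (1 - l * x (Fin.last m)) ^ 2
      = α i * ((l * x i) ^ 2 / (1 - l * x i) ^ 2 * (1 - l * x (Fin.last m)) ^ 2) := by field_simp
  rw [e, mul_left_comm 2]
  refine mul_le_mul_of_nonneg_left ?_ (h.pos i).le
  rcases le_total 0 (l * x i) with hz | hz
  · refine le_trans (dch_le_q hz hi) ?_
    exact le_mul_of_one_le_right (by positivity) (one_le_pow₀ (by linarith))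
  · refine le_trans (dch_le_sq hz) ?_
    rw [div_mul_eq_mul_div, le_div_iff₀ (by positivity)]
    exact mul_le_mul_of_nonneg_left (pow_le_pow_left₀ (by linarith) (by linarith) 2) (sq_nonneg _)

lemma dc_H_nonneg {m : ℕ} {α x : Fin (m + 1) → ℝ} (h : dcHyp α x) {l : ℝ} (hl : ∀ i, l * x i < 1) :
    0 ≤ dcH α x l := by
  rw [dcH_eq]
  exact Finset.sum_nonneg fun i _ => mul_nonneg (h.pos i).le (dch_nonneg (hl i))

lemma dc_H_pos {m : ℕ} {α x : Fin (m + 1) → ℝ} (h : dcHyp α x) {l : ℝ} (hl : ∀ i, l * x i < 1) (hl0 : l ≠ 0) :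
    0 < dcH α x l := by
  rw [dcH_eq]
  have hnn : ∀ i ∈ Finset.univ, 0 ≤ α i * dch (l * x i) := fun i _ => mul_nonneg (h.pos i).le (dch_nonneg (hl i))
  rcases lt_or_gt_of_ne hl0 with hn | hp
  · refine Finset.sum_pos' hnn ⟨Fin.last m, Finset.mem_univ _, mul_pos (h.pos _) ?_⟩
    have hz : l * x (Fin.last m) < 0 := mul_neg_of_neg_of_pos hn h.posm
    have := dch_ge_q hz.le
    have : 0 < (l * x (Fin.last m)) ^ 2 / (1 - l * x (Fin.last m)) ^ 2 :=
      div_pos (by have := hz.ne; positivity) (pow_pos (by linarith) 2)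
    linarith
  · refine Finset.sum_pos' hnn ⟨0, Finset.mem_univ _, mul_pos (h.pos _) ?_⟩
    have hz : l * x 0 < 0 := mul_neg_of_pos_of_neg hp h.neg0
    have := dch_ge_q hz.le
    have : 0 < (l * x 0) ^ 2 / (1 - l * x 0) ^ 2 :=
      div_pos (by have := hz.ne; positivity) (pow_pos (by linarith) 2)
    linarith

lemma dcV_deriv {m : ℕ} (α x : Fin (m + 1) → ℝ) (l : ℝ) (hl : ∀ i, l * x i < 1) :
    HasDerivAt (dcV α x) (dcQ α x l) l := by
  unfold dcV dcQ
  refine HasDerivAt.fun_sum fun i _ => ?_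
  refine HasDerivAt.const_mul _ ?_
  have hne : 1 - l * x i ≠ 0 := by have := hl i; linarith
  have h1 : HasDerivAt (fun l : ℝ => 1 - l * x i) (-(x i)) l := by
    simpa using ((hasDerivAt_id l).mul_const (x i)).const_sub 1
  refine ((hasDerivAt_const l (x i)).div h1 hne).congr_deriv ?_
  field_simp; ring

lemma dcH_deriv {m : ℕ} (α x : Fin (m + 1) → ℝ) (l : ℝ) (hl : ∀ i, l * x i < 1) :
    HasDerivAt (dcH α x) (l * dcQ α x l) l := by
  have e : dcH α x = fun l => ∑ i, α i * dch (l * x i) := rfl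
  rw [e]
  unfold dcQ
  rw [Finset.mul_sum]
  refine HasDerivAt.fun_sum fun i _ => ?_
  have h1 : HasDerivAt (fun l : ℝ => l * x i) (x i) l := by
    simpa using (hasDerivAt_id l).mul_const (x i)
  refine (((dch_deriv _ (hl i)).comp l h1).const_mul (α i)).congr_deriv ?_
  field_simp

lemma dc_cdf_deriv (ν : Measure ℝ) [IsProbabilityMeasure ν] (g : ℝ → ℝ) (hg : Continuous g) (hg0 : ∀ v, 0 ≤ g v)
    (hν : ν = volume.withDensity fun v => ENNReal.ofReal (g v)) (a : ℝ) :
    HasDerivAt (fun v => cdf ν v) (g a) a := by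
  have hl : ∫⁻ v, ENNReal.ofReal (g v) = 1 := by
    have : ν univ = 1 := measure_univ
    rw [hν, withDensity_apply _ MeasurableSet.univ, Measure.restrict_univ] at this
    exact this
  have hi : Integrable g := by
    refine ⟨hg.aestronglyMeasurable, ?_⟩
    rw [hasFiniteIntegral_iff_ofReal (Filter.Eventually.of_forall hg0), hl]; simp
  have hc : ∀ v, cdf ν v = ∫ t in Iic v, g t := by
    intro v
    rw [cdf_eq_real, Measure.real, hν, withDensity_apply _ measurableSet_Iic,
      ← ofReal_integral_eq_lintegral_ofReal hi.integrableOn (Filter.Eventually.of_forall hg0),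
      ENNReal.toReal_ofReal (integral_nonneg hg0)]
  have h2 : (fun v => cdf ν v) = fun v => (∫ t in a..v, g t) + cdf ν a := by
    ext v
    rw [hc, hc, ← intervalIntegral.integral_Iic_sub_Iic hi.integrableOn hi.integrableOn]; ring
  rw [h2]
  refine HasDerivAt.add_const _ ?_
  exact intervalIntegral.integral_hasDerivAt_right (hg.intervalIntegrable _ _)
    hg.stronglyMeasurable.stronglyMeasurableAtFilter hg.continuousAt

lemma dc_gauss_deriv (a : ℝ) : HasDerivAt (fun v => cdf (gaussianReal 0 1) v) (gaussianPDFReal 0 1 a) a := by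
  refine dc_cdf_deriv _ (gaussianPDFReal 0 1) ?_ (gaussianPDFReal_nonneg 0 1) ?_ a
  · unfold gaussianPDFReal; fun_prop
  · rw [gaussianReal_of_var_ne_zero _ one_ne_zero]; rfl

lemma dc_gauss_pdf (B H : ℝ) (hB : B ^ 2 = 2 * H) : gaussianPDFReal 0 1 B = Real.exp (-H) / √(2 * π) := by
  unfold gaussianPDFReal
  have : -(B - 0) ^ 2 / (2 * ((1 : NNReal) : ℝ)) = -H := by rw [sub_zero, hB]; simp only [NNReal.coe_one]; ring
  rw [this]
  simp [div_eq_inv_mul]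

lemma dc_H_cont {m : ℕ} {α x : Fin (m + 1) → ℝ} {l : ℝ} (hl : ∀ i, l * x i < 1) :
    ContinuousAt (dcH α x) l := (dcH_deriv α x l hl).continuousAt

lemma dc_sqrtH_deriv {m : ℕ} {α x : Fin (m + 1) → ℝ} (h : dcHyp α x) {l : ℝ} (hl : ∀ i, l * x i < 1) (hl0 : l ≠ 0) :
    HasDerivAt (fun l => √(2 * dcH α x l)) (l * dcQ α x l / √(2 * dcH α x l)) l := by
  have hp := dc_H_pos h hl hl0
  refine (((dcH_deriv α x l hl).const_mul 2).sqrt (by positivity)).congr_deriv ?_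
  rw [mul_div_mul_left _ _ two_ne_zero]

lemma dc_case1 {m : ℕ} {α x : Fin (m + 1) → ℝ} (h : dcHyp α x) (ε : ℝ) (hε : 0 < ε) (hε1 : ε < 1)
    (hmin : c0 / ε ^ 2 ≤ min (α 0) (α (Fin.last m)))
    (ν : Measure ℝ) [IsProbabilityMeasure ν]
    (hν : ν = volume.withDensity fun v => ENNReal.ofReal
      (dcDens (Function.update α (Fin.last m) (α (Fin.last m) + 1)) x v))
    (hgc : Continuous (dcDens (Function.update α (Fin.last m) (α (Fin.last m) + 1)) x))
    (hg0 : ∀ v, 0 ≤ dcDens (Function.update α (Fin.last m) (α (Fin.last m) + 1)) x v)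
    (l0 : ℝ) (hl0 : 0 ≤ l0) (hl0m : l0 * x (Fin.last m) < 1) :
    (1 - ε) * (1 - cdf (gaussianReal 0 1) (√(2 * dcH α x l0))) ≤ 1 - cdf ν (dcV α x l0) := by
  set xm := x (Fin.last m) with hxm
  have hxm0 : 0 < xm := h.posm
  have hdom : ∀ l, 0 ≤ l → l < 1 / xm → ∀ i, l * x i < 1 := by
    intro l h1 h2
    rw [lt_div_iff₀ hxm0] at h2
    exact dc_mul_lt h (by nlinarith [h.neg0]) h2
  have hl0' : l0 < 1 / xm := by rwa [lt_div_iff₀ hxm0]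
  set Φ : ℝ → ℝ := fun v => cdf (gaussianReal 0 1) v with hΦ
  set G : ℝ → ℝ := fun v => cdf ν v with hG
  set g := dcDens (Function.update α (Fin.last m) (α (Fin.last m) + 1)) x with hg
  have hGd : ∀ a, HasDerivAt G (g a) a := dc_cdf_deriv ν g hgc hg0 hν
  let F : ℝ → ℝ := fun l => (1 - G (dcV α x l)) - (1 - ε) * (1 - Φ (√(2 * dcH α x l)))
  have hFd : ∀ l, 0 < l → l < 1 / xm → HasDerivAt F
      (-(g (dcV α x l) * dcQ α x l) + (1 - ε) * (gaussianPDFReal 0 1 (√(2 * dcH α x l)) * (l * dcQ α x l / √(2 * dcH α x l)))) l := by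
    intro l h1 h2
    have hl := hdom l h1.le h2
    have d1 := (hGd (dcV α x l)).comp l (dcV_deriv α x l hl)
    have d2 := (dc_gauss_deriv (√(2 * dcH α x l))).comp l (dc_sqrtH_deriv h hl h1.ne')
    refine ((d1.const_sub 1).sub ((d2.const_sub 1).const_mul (1 - ε))).congr_deriv ?_
    ring
  have hanti : AntitoneOn F (Ico l0 (1 / xm)) := by
    refine antitoneOn_of_deriv_nonpos (convex_Ico _ _) ?_ ?_ ?_
    · intro l hl
      have hl' := hdom l (hl0.trans hl.1) hl.2
      refine ContinuousAt.continuousWithinAt ?_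
      have c1 : ContinuousAt (fun l => G (dcV α x l)) l :=
        ContinuousAt.comp (hGd (dcV α x l)).continuousAt (dcV_deriv α x l hl').continuousAt
      have c2 : ContinuousAt (fun l => √(2 * dcH α x l)) l :=
        ((dc_H_cont hl').const_mul 2).sqrt
      have c3 : ContinuousAt (fun l => Φ (√(2 * dcH α x l))) l :=
        ContinuousAt.comp (f := fun l => √(2 * dcH α x l)) (g := Φ) (dc_gauss_deriv _).continuousAt c2
      exact (continuousAt_const.sub c1).sub (continuousAt_const.mul (continuousAt_const.sub c3))
    · rw [interior_Ico]
      exact fun l hl => (hFd l (hl0.trans_lt hl.1) hl.2).differentiableAt.differentiableWithinAt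
    · rw [interior_Ico]
      intro l hl
      have hlp : 0 < l := hl0.trans_lt hl.1
      have hl' := hdom l hlp.le hl.2
      rw [(hFd l hlp hl.2).deriv]
      have hHp := dc_H_pos h hl' hlp.ne'
      have hQp := dc_Q_pos h (hl' 0)
      rw [dc_gauss_pdf (√(2 * dcH α x l)) (dcH α x l) (Real.sq_sqrt (by positivity))]
      have hb := (dc_density_bounds h (hl' 0) (hl' _) ε hε hε1 hmin).1
      have hge := dc_H_ge h hlp.le (hl' (Fin.last m))
      rw [← hg, ← hxm] at hb
      rw [← hxm] at hge
      have hu : 0 < 1 - l * xm := by have := hl' (Fin.last m); rw [← hxm] at this; linarith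
      set s := √(dcQ α x l) with hs
      have hs0 : 0 < s := Real.sqrt_pos.2 hQp
      have hs2 : dcQ α x l = s ^ 2 := (Real.sq_sqrt hQp.le).symm
      set B := √(2 * dcH α x l) with hB
      have hB0 : 0 < B := Real.sqrt_pos.2 (by positivity)
      have hlB : l * s * (1 - l * xm) ≤ B := by
        refine Real.le_sqrt_of_sq_le ?_
        rw [hs2] at hge
        calc (l * s * (1 - l * xm)) ^ 2 = l ^ 2 * s ^ 2 * (1 - l * xm) ^ 2 := by ring
          _ ≤ _ := hge
      rw [hs2]
      set E := Real.exp (-dcH α x l) with hE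
      have hE0 : 0 < E := Real.exp_pos _
      have hq0 : 0 < √(2 * π) := by positivity
      have k1 : l * s ^ 2 / B ≤ s / (1 - l * xm) := by
        rw [div_le_div_iff₀ hB0 hu]
        nlinarith
      have k2 : E / √(2 * π) * (l * s ^ 2 / B) ≤ E / (√(2 * π) * (s * (1 - l * xm))) * s ^ 2 := by
        calc E / √(2 * π) * (l * s ^ 2 / B) ≤ E / √(2 * π) * (s / (1 - l * xm)) :=
              mul_le_mul_of_nonneg_left k1 (by positivity)
          _ = E / (√(2 * π) * (s * (1 - l * xm))) * s ^ 2 := by field_simp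
      have k3 := mul_le_mul_of_nonneg_right hb (sq_nonneg s)
      have k4 := mul_le_mul_of_nonneg_left k2 (by linarith : 0 ≤ 1 - ε)
      linarith
  -- limit at the right end
  have hne : (nhdsWithin (1 / xm) (Iio (1 / xm))).NeBot := inferInstance
  have hu0 : Filter.Tendsto (fun l => √(1 - l * xm)) (nhdsWithin (1 / xm) (Iio (1 / xm))) (nhdsWithin 0 (Ioi 0)) := by
    refine tendsto_nhdsWithin_iff.2 ⟨?_, ?_⟩
    · have : ContinuousAt (fun l => √(1 - l * xm)) (1 / xm) := by fun_prop
      have h2 : √(1 - 1 / xm * xm) = 0 := by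
        rw [one_div, inv_mul_cancel₀ hxm0.ne']; simp
      have h3 := this.tendsto
      rw [h2] at h3
      exact h3.mono_left nhdsWithin_le_nhds
    · filter_upwards [self_mem_nhdsWithin] with l hl
      refine Real.sqrt_pos.2 ?_
      have : l < 1 / xm := hl
      rw [lt_div_iff₀ hxm0] at this
      linarith
  have hHt : Filter.Tendsto (fun l => √(2 * dcH α x l)) (nhdsWithin (1 / xm) (Iio (1 / xm))) Filter.atTop := by
    have t1 : Filter.Tendsto (fun l => √(2 * α (Fin.last m)) * ((√(1 - l * xm))⁻¹ - 1)) (nhdsWithin (1 / xm) (Iio (1 / xm))) Filter.atTop := by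
      refine Filter.Tendsto.const_mul_atTop (Real.sqrt_pos.2 (by have := h.pos (Fin.last m); positivity)) ?_
      exact Filter.tendsto_atTop_add_const_right _ (-1) (tendsto_inv_nhdsGT_zero.comp hu0)
    refine Filter.tendsto_atTop_mono' _ ?_ t1
    filter_upwards [Ioo_mem_nhdsLT hl0'] with l hl
    have hl' := hdom l (hl0.trans hl.1.le) hl.2
    refine Real.le_sqrt_of_sq_le ?_
    rw [mul_pow, Real.sq_sqrt (by have := h.pos (Fin.last m); positivity), mul_assoc]
    refine mul_le_mul_of_nonneg_left ?_ two_pos.le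
    rw [dcH_eq]
    refine le_trans (mul_le_mul_of_nonneg_left (dch_lower (hl' (Fin.last m))) (h.pos _).le) ?_
    exact Finset.single_le_sum (f := fun i => α i * dch (l * x i)) (fun i _ => mul_nonneg (h.pos i).le (dch_nonneg (hl' i)))
      (Finset.mem_univ (Fin.last m))
  have hlim : Filter.Tendsto (fun l => -((1 - ε) * (1 - Φ (√(2 * dcH α x l))))) (nhdsWithin (1 / xm) (Iio (1 / xm))) (nhds 0) := by
    have := (tendsto_cdf_atTop (gaussianReal 0 1)).comp hHt
    have h2 := ((this.const_sub 1).const_mul (1 - ε)).neg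
    simpa using h2
  have hfin : 0 ≤ F l0 := by
    refine le_of_tendsto hlim ?_
    filter_upwards [Ioo_mem_nhdsLT hl0'] with l hl
    have hh := hanti (show l0 ∈ Ico l0 (1 / xm) from ⟨le_rfl, hl0'⟩) (show l ∈ Ico l0 (1 / xm) from ⟨hl.1.le, hl.2⟩) hl.1.le
    have hc : G (dcV α x l) ≤ 1 := cdf_le_one ν _
    have : F l = (1 - G (dcV α x l)) - (1 - ε) * (1 - Φ (√(2 * dcH α x l))) := rfl
    linarith
  have : F l0 = (1 - G (dcV α x l0)) - (1 - ε) * (1 - Φ (√(2 * dcH α x l0))) := rfl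
  linarith

lemma dc_V_atBot {m : ℕ} {α x : Fin (m + 1) → ℝ} (h : dcHyp α x) :
    Filter.Tendsto (dcV α x) (nhdsWithin (1 / x 0) (Ioi (1 / x 0))) Filter.atBot := by
  have hx0 := h.neg0
  have h10 : 1 / x 0 < 0 := one_div_neg.2 hx0
  have hu0 : Filter.Tendsto (fun l => 1 - l * x 0) (nhdsWithin (1 / x 0) (Ioi (1 / x 0))) (nhdsWithin 0 (Ioi 0)) := by
    refine tendsto_nhdsWithin_iff.2 ⟨?_, ?_⟩
    · have : ContinuousAt (fun l => 1 - l * x 0) (1 / x 0) := by fun_prop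
      have h2 : 1 - 1 / x 0 * x 0 = 0 := by
        rw [one_div, inv_mul_cancel₀ hx0.ne]; simp
      have h3 := this.tendsto
      rw [h2] at h3
      exact h3.mono_left nhdsWithin_le_nhds
    · filter_upwards [self_mem_nhdsWithin] with l hl
      have : 1 / x 0 < l := hl
      rw [div_lt_iff_of_neg hx0] at this
      change 0 < 1 - l * x 0
      linarith
  have t1 : Filter.Tendsto (fun l => (α 0 * x 0) * (1 - l * x 0)⁻¹ + ∑ i, α i * x (Fin.last m)) (nhdsWithin (1 / x 0) (Ioi (1 / x 0))) Filter.atBot := by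
    refine Filter.tendsto_atBot_add_const_right _ _ ?_
    refine Filter.Tendsto.const_mul_atTop_of_neg (mul_neg_of_pos_of_neg (h.pos 0) hx0) ?_
    exact tendsto_inv_nhdsGT_zero.comp hu0
  refine Filter.tendsto_atBot_mono' _ ?_ t1
  filter_upwards [Ioo_mem_nhdsGT h10] with l hl
  have hl1 : l * x 0 < 1 := by
    have := hl.1
    rw [div_lt_iff_of_neg hx0] at this; exact this
  have hl' := dc_mul_lt h hl1 (by nlinarith [h.posm, hl.2])
  unfold dcV
  rw [Fin.sum_univ_succ, Fin.sum_univ_succ]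
  have a1 : α 0 * (x 0 / (1 - l * x 0)) = α 0 * x 0 * (1 - l * x 0)⁻¹ := by rw [div_eq_mul_inv]; ring
  rw [a1]
  have a2 : 0 ≤ α 0 * x (Fin.last m) := mul_nonneg (h.pos 0).le h.posm.le
  have a3 : ∑ i : Fin m, α i.succ * (x i.succ / (1 - l * x i.succ)) ≤ ∑ i : Fin m, α i.succ * x (Fin.last m) := by
    refine Finset.sum_le_sum fun i _ => mul_le_mul_of_nonneg_left ?_ (h.pos _).le
    refine le_trans ?_ (h.hi i.succ)
    rw [div_le_iff₀ (by linarith [hl' i.succ])]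
    nlinarith [sq_nonneg (x i.succ), hl.2]
  linarith

lemma dc_V_atTop {m : ℕ} {α x : Fin (m + 1) → ℝ} (h : dcHyp α x) :
    Filter.Tendsto (dcV α x) (nhdsWithin (1 / x (Fin.last m)) (Iio (1 / x (Fin.last m)))) Filter.atTop := by
  have hxm := h.posm
  have h10 : 0 < 1 / x (Fin.last m) := one_div_pos.2 hxm
  have hu0 : Filter.Tendsto (fun l => 1 - l * x (Fin.last m)) (nhdsWithin (1 / x (Fin.last m)) (Iio (1 / x (Fin.last m)))) (nhdsWithin 0 (Ioi 0)) := by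
    refine tendsto_nhdsWithin_iff.2 ⟨?_, ?_⟩
    · have : ContinuousAt (fun l => 1 - l * x (Fin.last m)) (1 / x (Fin.last m)) := by fun_prop
      have h2 : 1 - 1 / x (Fin.last m) * x (Fin.last m) = 0 := by
        rw [one_div, inv_mul_cancel₀ hxm.ne']; simp
      have h3 := this.tendsto
      rw [h2] at h3
      exact h3.mono_left nhdsWithin_le_nhds
    · filter_upwards [self_mem_nhdsWithin] with l hl
      have : l < 1 / x (Fin.last m) := hl
      rw [lt_div_iff₀ hxm] at this
      change 0 < 1 - l * x (Fin.last m)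
      linarith
  have t1 : Filter.Tendsto (fun l => (α (Fin.last m) * x (Fin.last m)) * (1 - l * x (Fin.last m))⁻¹ + ∑ i, α i * x 0)
      (nhdsWithin (1 / x (Fin.last m)) (Iio (1 / x (Fin.last m)))) Filter.atTop := by
    refine Filter.tendsto_atTop_add_const_right _ _ ?_
    refine Filter.Tendsto.const_mul_atTop (mul_pos (h.pos _) hxm) ?_
    exact tendsto_inv_nhdsGT_zero.comp hu0
  refine Filter.tendsto_atTop_mono' _ ?_ t1
  filter_upwards [Ioo_mem_nhdsLT h10] with l hl
  have hl1 : l * x (Fin.last m) < 1 := by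
    have := hl.2
    rw [lt_div_iff₀ hxm] at this; exact this
  have hl' := dc_mul_lt h (by nlinarith [h.neg0, hl.1]) hl1
  unfold dcV
  rw [Fin.sum_univ_castSucc, Fin.sum_univ_castSucc]
  have a1 : α (Fin.last m) * (x (Fin.last m) / (1 - l * x (Fin.last m))) = α (Fin.last m) * x (Fin.last m) * (1 - l * x (Fin.last m))⁻¹ := by
    rw [div_eq_mul_inv]; ring
  rw [a1]
  have a2 : α (Fin.last m) * x 0 ≤ 0 := mul_nonpos_of_nonneg_of_nonpos (h.pos _).le h.neg0.le
  have a3 : ∑ i : Fin m, α i.castSucc * x 0 ≤ ∑ i : Fin m, α i.castSucc * (x i.castSucc / (1 - l * x i.castSucc)) := by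
    refine Finset.sum_le_sum fun i _ => mul_le_mul_of_nonneg_left ?_ (h.pos _).le
    refine le_trans (h.lo i.castSucc) ?_
    rw [le_div_iff₀ (by linarith [hl' i.castSucc])]
    nlinarith [sq_nonneg (x i.castSucc), hl.1]
  linarith

lemma dc_case2 {m : ℕ} {α x : Fin (m + 1) → ℝ} (h : dcHyp α x) (ε : ℝ) (hε : 0 < ε) (hε1 : ε < 1)
    (hmin : c0 / ε ^ 2 ≤ min (α 0) (α (Fin.last m)))
    (ν : Measure ℝ) [IsProbabilityMeasure ν]
    (hν : ν = volume.withDensity fun v => ENNReal.ofReal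
      (dcDens (Function.update α (Fin.last m) (α (Fin.last m) + 1)) x v))
    (hgc : Continuous (dcDens (Function.update α (Fin.last m) (α (Fin.last m) + 1)) x))
    (hg0 : ∀ v, 0 ≤ dcDens (Function.update α (Fin.last m) (α (Fin.last m) + 1)) x v)
    (l0 : ℝ) (hl0 : l0 < 0) (hl00 : l0 * x 0 < 1) :
    cdf ν (dcV α x l0) ≤ (1 + ε) * cdf (gaussianReal 0 1) (-√(2 * dcH α x l0)) := by
  set xm := x (Fin.last m) with hxm
  have hxm0 : 0 < xm := h.posm
  have hx0 := h.neg0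
  have hdom : ∀ l, l ≤ 0 → 1 / x 0 < l → ∀ i, l * x i < 1 := by
    intro l h1 h2
    rw [div_lt_iff_of_neg hx0] at h2
    exact dc_mul_lt h h2 (by nlinarith [h.posm])
  have hl0' : 1 / x 0 < l0 := by rwa [div_lt_iff_of_neg hx0]
  set Φ : ℝ → ℝ := fun v => cdf (gaussianReal 0 1) v with hΦ
  set G : ℝ → ℝ := fun v => cdf ν v with hG
  set g := dcDens (Function.update α (Fin.last m) (α (Fin.last m) + 1)) x with hg
  have hGd : ∀ a, HasDerivAt G (g a) a := dc_cdf_deriv ν g hgc hg0 hν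
  let F : ℝ → ℝ := fun l => G (dcV α x l) - (1 + ε) * Φ (-√(2 * dcH α x l))
  have hFd : ∀ l, l < 0 → 1 / x 0 < l → HasDerivAt F
      (g (dcV α x l) * dcQ α x l - (1 + ε) * (gaussianPDFReal 0 1 (-√(2 * dcH α x l)) * (-(l * dcQ α x l / √(2 * dcH α x l))))) l := by
    intro l h1 h2
    have hl := hdom l h1.le h2
    have d1 := (hGd (dcV α x l)).comp l (dcV_deriv α x l hl)
    have d2 := (dc_gauss_deriv (-√(2 * dcH α x l))).comp l (dc_sqrtH_deriv h hl h1.ne).neg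
    exact d1.sub (d2.const_mul (1 + ε))
  have hanti : AntitoneOn F (Ioc (1 / x 0) l0) := by
    refine antitoneOn_of_deriv_nonpos (convex_Ioc _ _) ?_ ?_ ?_
    · intro l hl
      exact (hFd l (hl.2.trans_lt hl0) hl.1).continuousAt.continuousWithinAt
    · rw [interior_Ioc]
      exact fun l hl => (hFd l (hl.2.trans hl0) hl.1).differentiableAt.differentiableWithinAt
    · rw [interior_Ioc]
      intro l hl
      have hlp : l < 0 := hl.2.trans hl0
      have hl' := hdom l hlp.le hl.1
      rw [(hFd l hlp hl.1).deriv]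
      have hHp := dc_H_pos h hl' hlp.ne
      have hQp := dc_Q_pos h (hl' 0)
      rw [dc_gauss_pdf (-√(2 * dcH α x l)) (dcH α x l) (by rw [neg_sq]; exact Real.sq_sqrt (by positivity))]
      have hb := (dc_density_bounds h (hl' 0) (hl' _) ε hε hε1 hmin).2
      have hge := dc_H_le h hlp.le (hl' 0)
      rw [← hg, ← hxm] at hb
      rw [← hxm] at hge
      have hu : 0 < 1 - l * xm := by have := hl' (Fin.last m); rw [← hxm] at this; linarith
      set s := √(dcQ α x l) with hs
      have hs0 : 0 < s := Real.sqrt_pos.2 hQp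
      have hs2 : dcQ α x l = s ^ 2 := (Real.sq_sqrt hQp.le).symm
      set B := √(2 * dcH α x l) with hB
      have hB0 : 0 < B := Real.sqrt_pos.2 (by positivity)
      have hlB : B ≤ (-l) * s * (1 - l * xm) := by
        refine Real.sqrt_le_iff.2 ⟨?_, ?_⟩
        · have : 0 < -l := by linarith
          positivity
        rw [hs2] at hge
        calc _ ≤ _ := hge
          _ = (-l * s * (1 - l * xm)) ^ 2 := by ring
      rw [hs2]
      set E := Real.exp (-dcH α x l) with hE
      have hE0 : 0 < E := Real.exp_pos _
      have hq0 : 0 < √(2 * π) := by positivity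
      have k1 : s / (1 - l * xm) ≤ -(l * s ^ 2 / B) := by
        rw [← neg_div, div_le_div_iff₀ hu hB0]
        nlinarith
      have k2 : E / (√(2 * π) * (s * (1 - l * xm))) * s ^ 2 ≤ E / √(2 * π) * (-(l * s ^ 2 / B)) := by
        calc E / (√(2 * π) * (s * (1 - l * xm))) * s ^ 2 = E / √(2 * π) * (s / (1 - l * xm)) := by field_simp
          _ ≤ _ := mul_le_mul_of_nonneg_left k1 (by positivity)
      have k3 := mul_le_mul_of_nonneg_right hb (sq_nonneg s)
      have k4 := mul_le_mul_of_nonneg_left k2 (by linarith : 0 ≤ 1 + ε)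
      linarith
  have hlim : Filter.Tendsto (fun l => G (dcV α x l)) (nhdsWithin (1 / x 0) (Ioi (1 / x 0))) (nhds 0) :=
    (tendsto_cdf_atBot ν).comp (dc_V_atBot h)
  have hfin : F l0 ≤ 0 := by
    refine ge_of_tendsto hlim ?_
    filter_upwards [Ioo_mem_nhdsGT hl0'] with l hl
    have hh := hanti (show l ∈ Ioc (1 / x 0) l0 from ⟨hl.1, hl.2.le⟩) (show l0 ∈ Ioc (1 / x 0) l0 from ⟨hl0', le_rfl⟩) hl.2.le
    have hc : 0 ≤ Φ (-√(2 * dcH α x l)) := cdf_nonneg _ _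
    have h3 : F l = G (dcV α x l) - (1 + ε) * Φ (-√(2 * dcH α x l)) := rfl
    have h4 : 0 ≤ (1 + ε) * Φ (-√(2 * dcH α x l)) := by positivity
    linarith
  have : F l0 = G (dcV α x l0) - (1 + ε) * Φ (-√(2 * dcH α x l0)) := rfl
  linarith

lemma dc_Ici (ν : Measure ℝ) [IsProbabilityMeasure ν] (g : ℝ → ℝ≥0∞) (hν : ν = volume.withDensity g) (a : ℝ) :
    ν (Ici a) = ENNReal.ofReal (1 - cdf ν a) := by
  have hna : NullSingletonClass ν := ⟨fun v => by
    rw [hν]; exact withDensity_absolutelyContinuous _ _ (by simp)⟩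
  have h1 : ν (Ici a) = ν (Ioi a) := (measure_congr Ioi_ae_eq_Ici).symm
  have h2 : (Iic a)ᶜ = Ioi a := compl_Iic
  rw [h1, ← h2, cdf_eq_real, ← probReal_compl_eq_one_sub measurableSet_Iic, ofReal_measureReal]

lemma dc_gauss_dens : gaussianReal 0 1 = volume.withDensity (gaussianPDF 0 1) :=
  gaussianReal_of_var_ne_zero _ one_ne_zero

lemma dc_gauss_half (B : ℝ) (hB : B ≤ 0) : cdf (gaussianReal 0 1) B ≤ 1 / 2 := by
  have h1 : gaussianReal 0 1 (Iic 0) = gaussianReal 0 1 (Ici 0) := by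
    have h := gaussianReal_map_neg (μ := 0) (v := 1)
    rw [neg_zero] at h
    conv_lhs => rw [← h]
    rw [Measure.map_apply measurable_neg measurableSet_Iic]
    congr 1
    ext; simp
  rw [dc_Ici _ _ dc_gauss_dens, ← ofReal_measureReal, ← cdf_eq_real] at h1
  rw [ENNReal.ofReal_eq_ofReal_iff (cdf_nonneg _ _) (by linarith [cdf_le_one (gaussianReal 0 1) 0])] at h1
  have := monotone_cdf (gaussianReal 0 1) hB
  linarith

lemma dc_Kinf {m : ℕ} (α f : Fin (m + 1) → ℝ) (hα : ∀ i, 0 < α i) (μ l : ℝ)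
    (hl : ∀ i, l * (f i - μ) < 1) (hV : dcV α (fun i => f i - μ) l = 0) :
    Kinfstar (fun ℓ => α ℓ / ∑ j, α j) μ f = dcH α (fun i => f i - μ) l / ∑ j, α j := by
  set S := ∑ j, α j with hS
  have hS0 : 0 < S := Finset.sum_pos (fun i _ => hα i) ⟨0, Finset.mem_univ _⟩
  set p : Fin (m + 1) → ℝ := fun ℓ => α ℓ / S with hp
  have hp0 : ∀ i, 0 < p i := fun i => div_pos (hα i) hS0
  have hpS : ∑ i, p i = 1 := by rw [hp, ← Finset.sum_div, ← hS, div_self hS0.ne']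
  have hu : ∀ i, 0 < 1 - l * (f i - μ) := fun i => by linarith [hl i]
  have hval : dcH α (fun i => f i - μ) l / S = ∑ i, p i * Real.log (1 - l * (f i - μ)) := by
    have e1 : dcH α (fun i => f i - μ) l = l * dcV α (fun i => f i - μ) l + ∑ i, α i * Real.log (1 - l * (f i - μ)) := by
      unfold dcH dcV
      rw [Finset.mul_sum, ← Finset.sum_add_distrib]
      exact Finset.sum_congr rfl fun i _ => by ring
    rw [e1, hV, mul_zero, zero_add, Finset.sum_div]
    exact Finset.sum_congr rfl fun i _ => by rw [hp]; ring
  rw [hval]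
  unfold Kinfstar
  refine IsLeast.csInf_eq ⟨?_, ?_⟩
  · set q : Fin (m + 1) → ℝ := fun i => p i / (1 - l * (f i - μ)) with hq
    have hqx : ∑ i, (f i - μ) * q i = 0 := by
      have : ∑ i, (f i - μ) * q i = dcV α (fun i => f i - μ) l / S := by
        unfold dcV
        rw [Finset.sum_div]
        exact Finset.sum_congr rfl fun i _ => by rw [hq, hp]; ring
      rw [this, hV, zero_div]
    have hqs : ∑ i, q i = 1 := by
      have e : ∀ i, q i = p i + l * ((f i - μ) * q i) := by
        intro i
        have : q i * (1 - l * (f i - μ)) = p i := div_mul_cancel₀ _ (hu i).ne'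
        linarith
      rw [Finset.sum_congr rfl fun i _ => e i, Finset.sum_add_distrib, ← Finset.mul_sum, hqx, hpS]; ring
    refine ⟨q, ⟨fun i => (div_pos (hp0 i) (hu i)).le, hqs⟩, ?_, ?_, ?_⟩
    · intro i hi
      exact absurd hi (div_pos (hp0 i) (hu i)).ne'
    · have : ∑ i, (f i - μ) * q i = ∑ i, f i * q i - μ * ∑ i, q i := by
        rw [Finset.mul_sum, ← Finset.sum_sub_distrib]
        exact Finset.sum_congr rfl fun i _ => by ring
      rw [hqx, hqs] at this; linarith
    · unfold klReal
      refine Finset.sum_congr rfl fun i _ => ?_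
      rw [if_neg (hp0 i).ne', hq]
      simp only
      rw [div_div_cancel₀ (hp0 i).ne']
  · rintro v ⟨q, ⟨hq0, hqs⟩, hqp, hqf, rfl⟩
    have hq : ∀ i, 0 < q i := fun i => lt_of_le_of_ne (hq0 i) fun h => (hp0 i).ne' (hqp i h.symm)
    unfold klReal
    have key : ∀ i, p i * Real.log (1 - l * (f i - μ)) - (q i * (1 - l * (f i - μ)) - p i)
        ≤ if p i = 0 then 0 else p i * Real.log (p i / q i) := by
      intro i
      rw [if_neg (hp0 i).ne']
      have h1 := Real.log_le_sub_one_of_pos (div_pos (mul_pos (hq i) (hu i)) (hp0 i))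
      rw [Real.log_div (mul_pos (hq i) (hu i)).ne' (hp0 i).ne', Real.log_mul (hq i).ne' (hu i).ne'] at h1
      have h2 := mul_le_mul_of_nonneg_left h1 (hp0 i).le
      have h3 : p i * (q i * (1 - l * (f i - μ)) / p i - 1) = q i * (1 - l * (f i - μ)) - p i := by
        have := (hp0 i).ne'
        rw [mul_sub, mul_div_cancel₀ _ this, mul_one]
      rw [h3] at h2
      rw [Real.log_div (hp0 i).ne' (hq i).ne']
      linarith
    have hs := Finset.sum_le_sum fun i (_ : i ∈ Finset.univ) => key i
    rw [Finset.sum_sub_distrib, Finset.sum_sub_distrib, hpS] at hs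
    have hone : ∑ i, q i * (1 - l * (f i - μ)) = 1 := by
      have : ∑ i, q i * (1 - l * (f i - μ)) = ∑ i, q i - l * (∑ i, f i * q i - μ * ∑ i, q i) := by
        rw [Finset.mul_sum, ← Finset.sum_sub_distrib, Finset.mul_sum, ← Finset.sum_sub_distrib]
        exact Finset.sum_congr rfl fun i _ => by ring
      rw [this, hqs, hqf]; ring
    rw [hone] at hs
    linarith

lemma dc_exists_root_nonneg {m : ℕ} {α x : Fin (m + 1) → ℝ} (h : dcHyp α x) (h0 : dcV α x 0 ≤ 0) :
    ∃ l, 0 ≤ l ∧ l * x (Fin.last m) < 1 ∧ dcV α x l = 0 := by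
  have hxm := h.posm
  have h10 : 0 < 1 / x (Fin.last m) := one_div_pos.2 hxm
  obtain ⟨l1, hl1, hv⟩ := ((dc_V_atTop h).eventually (Filter.eventually_ge_atTop 0)).and
    (Ioo_mem_nhdsLT h10 : ∀ᶠ l in _, l ∈ Ioo 0 (1 / x (Fin.last m))) |>.exists
  have hdom : ∀ l ∈ Icc 0 l1, ∀ i, l * x i < 1 := by
    intro l hl
    have h2 : l < 1 / x (Fin.last m) := hl.2.trans_lt hv.2
    rw [lt_div_iff₀ hxm] at h2
    exact dc_mul_lt h (by nlinarith [h.neg0, hl.1]) h2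
  have hc : ContinuousOn (dcV α x) (Icc 0 l1) := fun l hl =>
    (dcV_deriv α x l (hdom l hl)).continuousAt.continuousWithinAt
  obtain ⟨l, hl, hlv⟩ := intermediate_value_Icc hv.1.le hc ⟨h0, hl1⟩
  exact ⟨l, hl.1, hdom l hl _, hlv⟩

lemma dc_exists_root_neg {m : ℕ} {α x : Fin (m + 1) → ℝ} (h : dcHyp α x) (h0 : 0 < dcV α x 0) :
    ∃ l, l < 0 ∧ l * x 0 < 1 ∧ dcV α x l = 0 := by
  have hx0 := h.neg0
  have h10 : 1 / x 0 < 0 := one_div_neg.2 hx0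
  obtain ⟨l1, hl1, hv⟩ := ((dc_V_atBot h).eventually (Filter.eventually_le_atBot 0)).and
    (Ioo_mem_nhdsGT h10 : ∀ᶠ l in _, l ∈ Ioo (1 / x 0) 0) |>.exists
  have hdom : ∀ l ∈ Icc l1 0, ∀ i, l * x i < 1 := by
    intro l hl
    have h2 : 1 / x 0 < l := hv.1.trans_le hl.1
    rw [div_lt_iff_of_neg hx0] at h2
    exact dc_mul_lt h h2 (by nlinarith [h.posm, hl.2])
  have hc : ContinuousOn (dcV α x) (Icc l1 0) := fun l hl =>
    (dcV_deriv α x l (hdom l hl)).continuousAt.continuousWithinAt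
  obtain ⟨l, hl, hlv⟩ := intermediate_value_Icc hv.2.le hc ⟨hl1, h0.le⟩
  refine ⟨l, lt_of_le_of_ne hl.2 ?_, hdom l hl _, hlv⟩
  rintro rfl
  linarith

/-- **Lower bound on Dirichlet boundary-crossing probabilities, all thresholds**
(Corollary 1, lower bound). -/
theorem dirichlet_crossing_lower_all_thresholds
    (m : ℕ) (hm : 1 ≤ m) (b : ℝ) (hb : 0 < b)
    (f : Fin (m + 1) → ℝ) (hf : ∀ i, f i ∈ Set.Icc (0 : ℝ) b)
    (hf0 : f 0 = 0) (hfm : f (Fin.last m) = b)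
    (α : Fin (m + 1) → ℝ) (hα : ∀ i, 0 < α i)
    (ε : ℝ) (hε : ε ∈ Set.Ioo (0 : ℝ) 1)
    (hmin : c0 / ε ^ 2 ≤ min (α 0) (α (Fin.last m)))
    (μ : ℝ) (hμ : μ ∈ Set.Ioo (0 : ℝ) b) :
    ENNReal.ofReal (1 - ε) *
        gaussianReal 0 1
          {x | Real.sqrt (∑ j, α j) * Afun (fun ℓ => α ℓ / ∑ j, α j) μ f ≤ x}
      ≤ dirichlet m (Function.update α (Fin.last m) (α (Fin.last m) + 1))
          {w | μ ≤ ∑ ℓ, f ℓ * w ℓ} := by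
  set x : Fin (m + 1) → ℝ := fun i => f i - μ with hx
  have h : dcHyp α x := by
    refine ⟨hα, ?_, ?_, fun i => ?_, fun i => ?_⟩
    · simp only [hx, hf0]; linarith [hμ.1]
    · simp only [hx, hfm]; linarith [hμ.2]
    · simp only [hx, hf0]; linarith [(hf i).1]
    · simp only [hx, hfm]; linarith [(hf i).2]
  set a := Function.update α (Fin.last m) (α (Fin.last m) + 1) with ha'
  have ha1 : 1 < a (Fin.last m) := by simp [ha', hα]
  have ha : ∀ i, 0 < a i := by
    intro i
    by_cases h : i = Fin.last m
    · subst h; linarith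
    · rw [ha', Function.update_of_ne h]; exact hα i
  have hgc := dcDens_cont a x ha ha1 h.posm
  have hg0 := dcDens_nonneg a x ha h.posm
  have hlaw := dc_law a x ha ha1 h.posm
  have hpp := dcPi_prob a ha
  have hXm : Measurable fun y : Fin (m + 1) → ℝ => ∑ i, x i * y i := by fun_prop
  set ν := (dcPi a).map (fun y => ∑ i, x i * y i) with hν
  have hνp : IsProbabilityMeasure ν := Measure.isProbabilityMeasure_map hXm.aemeasurable
  have hdir : dirichlet m a {w | μ ≤ ∑ ℓ, f ℓ * w ℓ} = ENNReal.ofReal (1 - cdf ν 0) := by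
    rw [dc_dirichlet a ha f μ, ← dc_Ici ν _ hlaw 0, hν, Measure.map_apply hXm measurableSet_Ici]
    rfl
  have hgs : ∀ c : ℝ, gaussianReal 0 1 {x | c ≤ x} = ENNReal.ofReal (1 - cdf (gaussianReal 0 1) c) := fun c =>
    dc_Ici _ _ dc_gauss_dens c
  rw [hdir, hgs, ← ENNReal.ofReal_mul (by linarith [hε.2])]
  refine ENNReal.ofReal_le_ofReal ?_
  set S := ∑ j, α j with hS
  have hS0 : 0 < S := Finset.sum_pos (fun i _ => hα i) ⟨0, Finset.mem_univ _⟩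
  have hV0 : dcV α x 0 = S * (∑ ℓ, f ℓ * (α ℓ / S) - μ) := by
    unfold dcV
    have e1 : S * (∑ ℓ, f ℓ * (α ℓ / S) - μ) = ∑ i, f i * α i - μ * S := by
      rw [mul_sub, Finset.mul_sum]
      congr 1
      · exact Finset.sum_congr rfl fun i _ => by field_simp
      · ring
    rw [e1, hS, Finset.mul_sum, ← Finset.sum_sub_distrib]
    refine Finset.sum_congr rfl fun i _ => ?_
    simp only [hx, zero_mul, sub_zero, div_one]; ring
  have hsq : ∀ H : ℝ, √S * √(2 * (H / S)) = √(2 * H) := by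
    intro H
    rw [← Real.sqrt_mul hS0.le]
    congr 1
    field_simp
  by_cases hc : dcV α x 0 ≤ 0
  · obtain ⟨l, hl0, hlm, hlv⟩ := dc_exists_root_nonneg h hc
    have hl : ∀ i, l * x i < 1 := dc_mul_lt h (by nlinarith [h.neg0]) hlm
    have hK := dc_Kinf α f hα μ l hl hlv
    have hmain := dc_case1 h ε hε.1 hε.2 hmin ν hlaw hgc hg0 l hl0 hlm
    rw [hlv] at hmain
    have hA : √S * Afun (fun ℓ => α ℓ / S) μ f = √(2 * dcH α x l) := by
      unfold Afun
      rw [hK]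
      have hle : ∑ ℓ, f ℓ * (α ℓ / S) - μ ≤ 0 := by
        rw [hV0] at hc
        by_contra hcon
        have := mul_pos hS0 (not_le.1 hcon)
        linarith
      rcases hle.lt_or_eq with hlt | heq
      · rw [Real.sign_of_pos (by linarith), one_mul]
        exact hsq _
      · have hz : dcV α x 0 = 0 := by rw [hV0, heq, mul_zero]
        have hl00 : l = 0 := by
          by_contra hne
          have hlpos : 0 < l := lt_of_le_of_ne hl0 (Ne.symm hne)
          have hmono : StrictMonoOn (dcV α x) (Icc 0 l) := by
            have hdom : ∀ t ∈ Icc 0 l, ∀ i, t * x i < 1 := by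
              intro t ht
              have : t * x (Fin.last m) ≤ l * x (Fin.last m) := mul_le_mul_of_nonneg_right ht.2 h.posm.le
              exact dc_mul_lt h (by nlinarith [h.neg0, ht.1]) (by linarith)
            refine strictMonoOn_of_deriv_pos (convex_Icc _ _) (fun t ht => (dcV_deriv α x t (hdom t ht)).continuousAt.continuousWithinAt) ?_
            intro t ht
            have ht' := interior_subset ht
            rw [(dcV_deriv α x t (hdom t ht')).deriv]
            exact dc_Q_pos h (hdom t ht' 0)
          have := hmono ⟨le_rfl, hl0⟩ ⟨hl0, le_rfl⟩ hlpos
          linarith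
        have hsg : μ - ∑ ℓ, f ℓ * (α ℓ / S) = 0 := by linarith
        rw [hsg, Real.sign_zero, zero_mul, mul_zero, hl00]
        simp [dcH]
    rw [hA]
    exact hmain
  · rw [not_le] at hc
    obtain ⟨l, hl0, hl00, hlv⟩ := dc_exists_root_neg h hc
    have hl : ∀ i, l * x i < 1 := dc_mul_lt h hl00 (by nlinarith [h.posm])
    have hK := dc_Kinf α f hα μ l hl hlv
    have hmain := dc_case2 h ε hε.1 hε.2 hmin ν hlaw hgc hg0 l hl0 hl00
    rw [hlv] at hmain
    have hA : √S * Afun (fun ℓ => α ℓ / S) μ f = -√(2 * dcH α x l) := by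
      unfold Afun
      rw [hK]
      have hle : 0 < ∑ ℓ, f ℓ * (α ℓ / S) - μ := by
        rw [hV0] at hc
        exact (mul_pos_iff_of_pos_left hS0).1 hc
      rw [Real.sign_of_neg (by linarith), neg_one_mul, mul_neg]
      congr 1
      exact hsq _
    rw [hA]
    have hhalf := dc_gauss_half (-√(2 * dcH α x l)) (by simp)
    nlinarith [hε.1]


end
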